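/- For every ε > 0 there exists s₀ = s₀(ε) such that for all integers s ≥ s₀, k ≥ 2 and n with n ≥ s + (1.666 + ε)·s·(k−1), one has m(n,k,s) = C(n,k) − C(n−s,k), where C(a,b) denotes the binomial coefficient. -/

import Mathlib

open Finset

/-- The matching number of a family of finite sets: the maximum size of a
subfamily consisting of pairwise disjoint sets. -/
noncomputable def matchingNumber (F : Finset (Finset ℕ)) : ℕ :=
  sSup {t : ℕ | ∃ M : Finset (Finset ℕ), M ⊆ F ∧
    (M : Set (Finset ℕ)).Pairwise (fun A B => Disjoint A B) ∧ M.card = t}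

/-- `maxSizeEMC n k s` is `m(n,k,s)`: the maximum size of a family of
`k`-element subsets of an `n`-element set with no matching of size `s+1`. -/
noncomputable def maxSizeEMC (n k s : ℕ) : ℕ :=
  sSup {t : ℕ | ∃ F : Finset (Finset ℕ), F ⊆ (Finset.range n).powersetCard k ∧
    matchingNumber F ≤ s ∧ F.card = t}


section

def Shifted (F : Finset (Finset ℕ)) : Prop :=
  ∀ A ∈ F, ∀ x ∈ A, ∀ y, y < x → y ∉ A → insert y (A.erase x) ∈ F

def NoM (F : Finset (Finset ℕ)) (s : ℕ) : Prop :=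
  ∀ M ⊆ F, (M : Set (Finset ℕ)).Pairwise (fun A B => Disjoint A B) → M.card ≤ s

theorem NoM.indexed {F : Finset (Finset ℕ)} {s : ℕ} (h : NoM F s) {ι : Type*} [Fintype ι]
    (hι : s < Fintype.card ι) (f : ι → Finset ℕ) (hf : ∀ i, f i ∈ F) (hne : ∀ i, (f i).Nonempty)
    (hd : ∀ i j, i ≠ j → Disjoint (f i) (f j)) : False := by
  classical
  have hinj : Function.Injective f := by
    intro i j hij
    by_contra hne'
    have := hd i j hne'
    rw [hij, disjoint_self] at this
    exact (hne j).ne_empty this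
  have h1 := h (univ.image f) (by
    intro A hA
    simp only [mem_image, mem_univ, true_and] at hA
    obtain ⟨i, rfl⟩ := hA
    exact hf i) (by
    intro A hA B hB hAB
    simp only [coe_image, coe_univ, Set.image_univ, Set.mem_range] at hA hB
    obtain ⟨i, rfl⟩ := hA
    obtain ⟨j, rfl⟩ := hB
    exact hd i j (fun h => hAB (by rw [h])))
  rw [card_image_of_injective _ hinj, card_univ] at h1
  omega

theorem NoM.mono {F G : Finset (Finset ℕ)} {s : ℕ} (h : NoM F s) (hG : G ⊆ F) : NoM G s :=
  fun M hM hd => h M (hM.trans hG) hd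

/-! ### shifting reduction -/

/-- one shift move on a set -/
def mv (x y : ℕ) (A : Finset ℕ) : Finset ℕ := insert y (A.erase x)

def cpr (x y : ℕ) (F : Finset (Finset ℕ)) (A : Finset ℕ) : Finset ℕ :=
  if x ∈ A ∧ y ∉ A ∧ mv x y A ∉ F then mv x y A else A

theorem mv_inj {x y : ℕ} (hxy : y ≠ x) {A B : Finset ℕ} (hA : x ∈ A ∧ y ∉ A) (hB : x ∈ B ∧ y ∉ B)
    (h : mv x y A = mv x y B) : A = B := by
  ext z
  have := congrArg (fun S => z ∈ S) h
  simp only [mv, mem_insert, mem_erase, eq_iff_iff] at this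
  by_cases hz : z = x
  · subst hz; tauto
  · by_cases hz' : z = y
    · subst hz'; tauto
    · tauto

theorem cpr_injOn (x y : ℕ) (hxy : y ≠ x) (F : Finset (Finset ℕ)) :
    Set.InjOn (cpr x y F) F := by
  intro A hA B hB h
  unfold cpr at h
  split_ifs at h with h1 h2 h2
  · exact mv_inj hxy ⟨h1.1, h1.2.1⟩ ⟨h2.1, h2.2.1⟩ h
  · exact absurd (h ▸ hB) h1.2.2
  · exact absurd (h ▸ hA) h2.2.2
  · exact h

theorem card_mv {x y : ℕ} {A : Finset ℕ} (hA : x ∈ A ∧ y ∉ A) : (mv x y A).card = A.card := by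
  unfold mv
  rw [card_insert_of_notMem (by simp [hA.2]), card_erase_of_mem hA.1]
  have := card_pos.2 ⟨x, hA.1⟩
  omega

theorem swap_map_eq {x y : ℕ} (hxy : y ≠ x) {A : Finset ℕ} (hy : y ∈ A) (hx : x ∉ A) :
    A.map (Equiv.swap x y).toEmbedding = mv y x A := by
  ext z
  rw [mem_map_equiv]
  simp only [mv, mem_insert, mem_erase, Equiv.symm_swap]
  by_cases hz : z = x
  · subst hz; simp [hy]
  · by_cases hz' : z = y
    · subst hz'; simp [hx, hxy]
    · rw [Equiv.swap_apply_of_ne_of_ne hz hz']; tauto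

theorem swap_map_self {x y : ℕ} {A : Finset ℕ} (hx : x ∉ A) (hy : y ∉ A) :
    A.map (Equiv.swap x y).toEmbedding = A := by
  ext z
  rw [mem_map_equiv, Equiv.symm_swap]
  by_cases hz : z = x
  · subst hz; simp [hx, hy]
  · by_cases hz' : z = y
    · subst hz'; simp [hx, hy]
    · rw [Equiv.swap_apply_of_ne_of_ne hz hz']

theorem sum_mv {x y : ℕ} {A : Finset ℕ} (hA : x ∈ A ∧ y ∉ A) :
    (∑ a ∈ mv x y A, a) + x = (∑ a ∈ A, a) + y := by
  unfold mv
  rw [sum_insert (by simp [hA.2])]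
  have := add_sum_erase A (fun a => a) hA.1
  omega

theorem NoM_cpr (x y : ℕ) (hxy : y < x) (F : Finset (Finset ℕ)) (s : ℕ) (h : NoM F s) :
    NoM (F.image (cpr x y F)) s := by
  classical
  intro M hM hd
  -- elements of the image: either in F, or moved
  have hmem : ∀ A ∈ M, A ∈ F ∧ (x ∈ A → y ∉ A → mv x y A ∈ F) ∨
      (A ∉ F ∧ y ∈ A ∧ x ∉ A ∧ mv y x A ∈ F) := by
    intro A hA
    obtain ⟨C, hC, rfl⟩ := mem_image.1 (hM hA)
    unfold cpr
    split_ifs with h1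
    · right
      refine ⟨h1.2.2, by simp [mv], by simp [mv]; omega, ?_⟩
      convert hC using 1
      ext z
      simp only [mv, mem_insert, mem_erase]
      by_cases hz : z = x
      · subst hz; tauto
      · by_cases hz' : z = y
        · subst hz'; tauto
        · tauto
    · left
      refine ⟨hC, fun hx hy => ?_⟩
      by_contra h2
      exact h1 ⟨hx, hy, h2⟩
  by_cases hall : ∀ A ∈ M, A ∈ F
  · exact h M hall hd
  push Not at hall
  obtain ⟨A, hA, hAF⟩ := hall
  have hA2 : y ∈ A ∧ x ∉ A ∧ mv y x A ∈ F := by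
    rcases hmem A hA with h1 | h1
    · exact absurd h1.1 hAF
    · exact h1.2
  have hothers : ∀ B ∈ M, B ≠ A → B ∈ F ∧ y ∉ B ∧ (x ∈ B → mv x y B ∈ F) := by
    intro B hB hBA
    have hdis : Disjoint B A := hd hB hA hBA
    have hyB : y ∉ B := fun h' => (disjoint_left.1 hdis h' hA2.1)
    rcases hmem B hB with h1 | h1
    · exact ⟨h1.1, hyB, fun hx => h1.2 hx hyB⟩
    · exact absurd h1.2.1 hyB
  have hinj : Function.Injective (fun C : Finset ℕ => C.map (Equiv.swap x y).toEmbedding) :=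
    Finset.map_injective _
  have := h (M.image (fun C : Finset ℕ => C.map (Equiv.swap x y).toEmbedding)) ?_ ?_
  · rwa [card_image_of_injective _ hinj] at this
  · intro D hD
    obtain ⟨C, hC, rfl⟩ := mem_image.1 hD
    by_cases hCA : C = A
    · subst hCA
      rw [swap_map_eq hxy.ne hA2.1 hA2.2.1]
      exact hA2.2.2
    · have h3 := hothers C hC hCA
      by_cases hxC : x ∈ C
      · rw [Equiv.swap_comm, swap_map_eq hxy.ne' hxC h3.2.1]
        exact h3.2.2 hxC
      · rw [swap_map_self hxC h3.2.1]; exact h3.1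
  · intro D hD D' hD' hne
    simp only [coe_image, Set.mem_image] at hD hD'
    obtain ⟨C, hC, rfl⟩ := hD
    obtain ⟨C', hC', rfl⟩ := hD'
    have : Disjoint C C' := hd hC hC' (fun h => hne (by rw [h]))
    exact (disjoint_map _).2 this

theorem exists_shifted (n k s : ℕ) (F : Finset (Finset ℕ)) (hF : F ⊆ (range n).powersetCard k)
    (hs : NoM F s) : ∃ G : Finset (Finset ℕ), G ⊆ (range n).powersetCard k ∧ NoM G s ∧
      G.card = F.card ∧ Shifted G := by
  classical
  let wt : Finset (Finset ℕ) → ℕ := fun G => ∑ A ∈ G, ∑ a ∈ A, a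
  have key : ∀ w : ℕ, ∀ F : Finset (Finset ℕ), wt F = w → F ⊆ (range n).powersetCard k → NoM F s →
      ∃ G : Finset (Finset ℕ), G ⊆ (range n).powersetCard k ∧ NoM G s ∧
      G.card = F.card ∧ Shifted G := by
    intro w
    induction w using Nat.strong_induction_on with
    | _ w ih =>
    intro F hw hF hs
    by_cases hsh : Shifted F
    · exact ⟨F, hF, hs, rfl, hsh⟩
    unfold Shifted at hsh
    push Not at hsh
    obtain ⟨A, hA, x, hx, y, hyx, hy, hnot⟩ := hsh
    have hcard : (F.image (cpr x y F)).card = F.card := card_image_of_injOn (cpr_injOn x y hyx.ne F)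
    have hlt : wt (F.image (cpr x y F)) < w := by
      rw [← hw]
      simp only [wt]
      rw [sum_image (cpr_injOn x y hyx.ne F)]
      apply sum_lt_sum
      · intro B hB
        unfold cpr
        split_ifs with h1
        · have := sum_mv ⟨h1.1, h1.2.1⟩; omega
        · exact le_rfl
      · refine ⟨A, hA, ?_⟩
        unfold cpr
        rw [if_pos ⟨hx, hy, hnot⟩]
        have := sum_mv ⟨hx, hy⟩; omega
    obtain ⟨G, h1, h2, h3, h4⟩ := ih _ hlt _ rfl (by
      intro D hD
      obtain ⟨C, hC, rfl⟩ := mem_image.1 hD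
      have hC' := mem_powersetCard.1 (hF hC)
      unfold cpr
      split_ifs with h1
      · rw [mem_powersetCard]
        refine ⟨?_, by rw [card_mv ⟨h1.1, h1.2.1⟩]; exact hC'.2⟩
        intro z hz
        simp only [mv, mem_insert, mem_erase] at hz
        have hxn := mem_range.1 (hC'.1 h1.1)
        rcases hz with rfl | hz
        · exact mem_range.2 (by omega)
        · exact hC'.1 hz.2
      · exact hF hC) (NoM_cpr x y hyx F s hs)
    exact ⟨G, h1, h2, h3.trans hcard, h4⟩
  exact key _ F rfl hF hs

end

section
set_option linter.unusedVariables false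

def ShOn (U : Finset ℕ) (F : Finset (Finset ℕ)) : Prop :=
  ∀ A ∈ F, ∀ x ∈ A, ∀ y ∈ U, y < x → y ∉ A → insert y (A.erase x) ∈ F

def ShadIn (X Y : Finset (Finset ℕ)) : Prop := ∀ A ∈ X, ∀ x ∈ A, A.erase x ∈ Y

def Lk (F : Finset (Finset ℕ)) (S U : Finset ℕ) (a : ℕ) : Finset (Finset ℕ) :=
  (U.powersetCard a).filter (fun G => S ∪ G ∈ F)

theorem mem_Lk {F : Finset (Finset ℕ)} {S U : Finset ℕ} {a : ℕ} {G : Finset ℕ} :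
    G ∈ Lk F S U a ↔ G ⊆ U ∧ G.card = a ∧ S ∪ G ∈ F := by
  simp [Lk, mem_powersetCard, and_assoc]

theorem Lk_sub (F : Finset (Finset ℕ)) (S U : Finset ℕ) (a : ℕ) : Lk F S U a ⊆ U.powersetCard a :=
  filter_subset _ _

theorem lym {U : Finset ℕ} {b : ℕ} {X Y : Finset (Finset ℕ)} (hX : X ⊆ U.powersetCard (b + 1))
    (hY : Y ⊆ U.powersetCard b) (h : ShadIn X Y) : X.card * (b + 1) ≤ Y.card * (U.card - b) := by
  classical
  refine card_mul_le_card_mul (fun A B => B ⊆ A) ?_ ?_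
  · intro A hA
    have hA' := mem_powersetCard.1 (hX hA)
    rw [← hA'.2]
    have : (A.image (fun x => A.erase x)) ⊆ bipartiteAbove (fun A B => B ⊆ A) Y A := by
      intro B hB
      obtain ⟨x, hx, rfl⟩ := mem_image.1 hB
      rw [mem_bipartiteAbove]
      exact ⟨h A hA x hx, erase_subset _ _⟩
    refine le_trans (le_of_eq ?_) (card_le_card this)
    rw [card_image_of_injOn]
    exact fun x hx y hy hxy => Finset.erase_injOn A hx hy hxy
  · intro B hB
    have hB' := mem_powersetCard.1 (hY hB)
    have : bipartiteBelow (fun A B => B ⊆ A) X B ⊆ (U \ B).image (fun x => insert x B) := by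
      intro A hA
      rw [mem_bipartiteBelow] at hA
      have hA' := mem_powersetCard.1 (hX hA.1)
      have h1 : (A \ B).card = 1 := by
        rw [card_sdiff_of_subset hA.2]; omega
      obtain ⟨x, hx⟩ := card_eq_one.1 h1
      have hx' : x ∈ A \ B := by rw [hx]; simp
      rw [mem_image]
      refine ⟨x, mem_sdiff.2 ⟨hA'.1 (mem_sdiff.1 hx').1, (mem_sdiff.1 hx').2⟩, ?_⟩
      rw [insert_eq, ← hx, sdiff_union_of_subset hA.2]
    refine (card_le_card this).trans (card_image_le.trans ?_)
    rw [card_sdiff_of_subset hB'.1, hB'.2]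

/-- splitting a family at a point -/
theorem split_card {U : Finset ℕ} {z a : ℕ} (hz : z ∉ U) {F : Finset (Finset ℕ)}
    (hF : F ⊆ (insert z U).powersetCard (a + 1)) :
    F.card = (F.filter (fun A => z ∉ A)).card + (Lk F {z} U a).card := by
  classical
  have h := card_filter_add_card_filter_not (s := F) (fun A => z ∉ A)
  rw [← h]
  congr 1
  refine card_bij (fun A _ => A.erase z) ?_ ?_ ?_
  · intro A hA
    rw [mem_filter, not_not] at hA
    have hA' := mem_powersetCard.1 (hF hA.1)
    rw [mem_Lk]
    refine ⟨?_, by rw [card_erase_of_mem hA.2]; omega, by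
      rw [← insert_eq, insert_erase hA.2]; exact hA.1⟩
    intro x hx
    have := hA'.1 (mem_of_mem_erase hx)
    rw [mem_insert] at this
    exact this.resolve_left (ne_of_mem_erase hx)
  · intro A hA B hB hAB
    rw [mem_filter, not_not] at hA hB
    rw [← insert_erase hA.2, hAB, insert_erase hB.2]
  · intro G hG
    rw [mem_Lk] at hG
    have hzG : z ∉ G := fun h => hz (hG.1 h)
    refine ⟨insert z G, ?_, erase_insert hzG⟩
    rw [mem_filter, not_not, insert_eq]
    exact ⟨hG.2.2, by simp⟩

theorem f0_sub {U : Finset ℕ} {z a : ℕ} {F : Finset (Finset ℕ)}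
    (hF : F ⊆ (insert z U).powersetCard a) : F.filter (fun A => z ∉ A) ⊆ U.powersetCard a := by
  intro A hA
  rw [mem_filter] at hA
  have hA' := mem_powersetCard.1 (hF hA.1)
  rw [mem_powersetCard]
  refine ⟨fun x hx => ?_, hA'.2⟩
  have := hA'.1 hx
  rw [mem_insert] at this
  exact this.resolve_left (fun h => hA.2 (h ▸ hx))

theorem ShOn.mono {U V : Finset ℕ} {F : Finset (Finset ℕ)} (h : ShOn U F) (hV : V ⊆ U) : ShOn V F :=
  fun A hA x hx y hy => h A hA x hx y (hV hy)

theorem ShOn.filter {U : Finset ℕ} {z : ℕ} (hz : z ∉ U) {F : Finset (Finset ℕ)} (h : ShOn U F) :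
    ShOn U (F.filter (fun A => z ∉ A)) := by
  intro A hA x hx y hy hyx hyA
  rw [mem_filter] at hA ⊢
  refine ⟨h A hA.1 x hx y hy hyx hyA, ?_⟩
  rw [mem_insert, mem_erase]
  push Not
  exact ⟨fun h => hz (h ▸ hy), fun _ => hA.2⟩

theorem ShOn.link {U S : Finset ℕ} (hS : Disjoint S U) {F : Finset (Finset ℕ)} (h : ShOn U F) (a : ℕ) :
    ShOn U (Lk F S U a) := by
  intro A hA x hx y hy hyx hyA
  rw [mem_Lk] at hA ⊢
  have hxS : x ∉ S := fun h => disjoint_left.1 hS h (hA.1 hx)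
  have hyS : y ∉ S := fun h => disjoint_left.1 hS h hy
  refine ⟨?_, ?_, ?_⟩
  · exact insert_subset hy ((erase_subset _ _).trans hA.1)
  · exact (card_mv ⟨hx, hyA⟩).trans hA.2.1
  · have := h _ hA.2.2 x (mem_union_right _ hx) y hy hyx (by simp [hyS, hyA])
    convert this using 1
    rw [erase_union_distrib, erase_eq_of_notMem hxS, union_insert]

theorem shad01 {U : Finset ℕ} {z a : ℕ} (hz : ∀ x ∈ U, z < x) {F : Finset (Finset ℕ)}
    (hF : F ⊆ (insert z U).powersetCard (a + 1)) (h : ShOn (insert z U) F) :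
    ShadIn (F.filter (fun A => z ∉ A)) (Lk F {z} U a) := by
  intro A hA x hx
  have hA' := mem_powersetCard.1 (f0_sub hF hA)
  rw [mem_filter] at hA
  rw [mem_Lk]
  refine ⟨(erase_subset _ _).trans hA'.1, by rw [card_erase_of_mem hx]; omega, ?_⟩
  rw [← insert_eq]
  exact h A hA.1 x hx z (mem_insert_self _ _) (hz x (hA'.1 hx)) hA.2

/-- number of disjoint pairs -/
def dp (F G : Finset (Finset ℕ)) : ℕ := ((F ×ˢ G).filter (fun p => Disjoint p.1 p.2)).card

theorem dp_le (F G : Finset (Finset ℕ)) : dp F G ≤ F.card * G.card := by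
  unfold dp
  rw [← card_product]
  exact card_filter_le _ _

theorem dp_split {U : Finset ℕ} {z a b : ℕ} (hz : z ∉ U) {F G : Finset (Finset ℕ)}
    (hF : F ⊆ (insert z U).powersetCard (a + 1)) (hG : G ⊆ (insert z U).powersetCard (b + 1)) :
    dp F G ≤ dp (Lk F {z} U a) (G.filter (fun A => z ∉ A)) +
      dp (F.filter (fun A => z ∉ A)) (Lk G {z} U b) +
      dp (F.filter (fun A => z ∉ A)) (G.filter (fun A => z ∉ A)) := by
  classical
  have key : ∀ (a : ℕ) (F : Finset (Finset ℕ)), F ⊆ (insert z U).powersetCard (a + 1) → ∀ A ∈ F, z ∈ A →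
      A.erase z ∈ Lk F {z} U a := by
    intro a F hF A hA hzA
    have hA' := mem_powersetCard.1 (hF hA)
    rw [mem_Lk]
    refine ⟨?_, by rw [card_erase_of_mem hzA]; omega, by
      rw [← insert_eq, insert_erase hzA]; exact hA⟩
    intro x hx
    have := hA'.1 (mem_of_mem_erase hx)
    rw [mem_insert] at this
    exact this.resolve_left (ne_of_mem_erase hx)
  unfold dp
  set F0 := F.filter (fun A => z ∉ A)
  set G0 := G.filter (fun A => z ∉ A)
  set P := ((F ×ˢ G).filter (fun p => Disjoint p.1 p.2)) with hP
  have h1 : (P.filter (fun p => z ∈ p.1)).card ≤ ((Lk F {z} U a ×ˢ G0).filter (fun p => Disjoint p.1 p.2)).card := by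
    refine card_le_card_of_injOn (fun p => (p.1.erase z, p.2)) ?_ ?_
    · intro p hp
      simp only [hP, coe_filter, mem_filter, mem_product, Set.mem_ofPred_eq] at hp
      simp only [coe_filter, mem_product, Set.mem_ofPred_eq]
      refine ⟨⟨key a F hF _ hp.1.1.1 hp.2, ?_⟩, hp.1.2.mono_left (erase_subset _ _)⟩
      exact mem_filter.2 ⟨hp.1.1.2, disjoint_left.1 hp.1.2 hp.2⟩
    · intro p hp q hq hpq
      simp only [hP, coe_filter, mem_filter, mem_product, Set.mem_ofPred_eq] at hp hq
      simp only [Prod.mk.injEq] at hpq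
      refine Prod.ext ?_ hpq.2
      rw [← insert_erase hp.2, hpq.1, insert_erase hq.2]
  have h2 : ((P.filter (fun p => ¬ z ∈ p.1)).filter (fun p => z ∈ p.2)).card ≤ ((F0 ×ˢ Lk G {z} U b).filter (fun p => Disjoint p.1 p.2)).card := by
    refine card_le_card_of_injOn (fun p => (p.1, p.2.erase z)) ?_ ?_
    · intro p hp
      simp only [hP, coe_filter, mem_filter, mem_product, Set.mem_ofPred_eq] at hp
      simp only [coe_filter, mem_product, Set.mem_ofPred_eq]
      refine ⟨⟨mem_filter.2 ⟨hp.1.1.1.1, hp.1.2⟩, key b G hG _ hp.1.1.1.2 hp.2⟩, hp.1.1.2.mono_right (erase_subset _ _)⟩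
    · intro p hp q hq hpq
      simp only [hP, coe_filter, mem_filter, mem_product, Set.mem_ofPred_eq] at hp hq
      simp only [Prod.mk.injEq] at hpq
      refine Prod.ext hpq.1 ?_
      rw [← insert_erase hp.2, hpq.2, insert_erase hq.2]
  have h3 : ((P.filter (fun p => ¬ z ∈ p.1)).filter (fun p => ¬ z ∈ p.2)).card ≤ ((F0 ×ˢ G0).filter (fun p => Disjoint p.1 p.2)).card := by
    apply card_le_card
    intro p hp
    simp only [hP, mem_filter, mem_product] at hp
    simp only [F0, G0, mem_filter, mem_product]
    tauto
  have h4 := card_filter_add_card_filter_not (s := P) (fun p => z ∈ p.1)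
  have h5 := card_filter_add_card_filter_not (s := P.filter (fun p => ¬ z ∈ p.1)) (fun p => z ∈ p.2)
  omega

theorem negcor_num {f0 f1 g0 g1 P10 P01 P00 c c' D X Y a b M L : ℝ} (hc : 0 < c) (hc' : 0 < c')
    (hM : 0 < M) (hL : 0 < L) (hb : 0 < b) (hab : a + M = b + L) (hD : 0 ≤ D)
    (h1 : c' * L = c * b) (h2 : X * M = D * b) (h3 : Y * M = D * (M - b))
    (hf : f0 * a ≤ f1 * M) (hg : g0 * b ≤ g1 * L)
    (hp1 : P10 * c ≤ f1 * g0 * D) (hp2 : P01 * c' ≤ f0 * g1 * X) (hp3 : P00 * c ≤ f0 * g0 * Y) :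
    (P10 + P01 + P00) * (c' + c) ≤ (f0 + f1) * (g0 + g1) * D := by
  have e1 : c' + c = c * ((b + L) / L) := by field_simp; linarith
  have e2 : c' + c = c' * ((b + L) / b) := by field_simp; linarith
  have hX : X = D * b / M := by field_simp; linarith
  have hY : Y = D * (M - b) / M := by field_simp; linarith
  have i1 : P10 * (c' + c) ≤ f1 * g0 * D * ((b + L) / L) := by
    rw [e1, ← mul_assoc]; gcongr
  have i3 : P00 * (c' + c) ≤ f0 * g0 * (D * (M - b) / M) * ((b + L) / L) := by
    rw [e1, ← mul_assoc, ← hY]; gcongr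
  have i2 : P01 * (c' + c) ≤ f0 * g1 * (D * b / M) * ((b + L) / b) := by
    rw [e2, ← mul_assoc, ← hX]; gcongr
  have key : (b + L) * (M * (f1 * g0) + L * (f0 * g1) + (M - b) * (f0 * g0)) ≤
      M * L * ((f0 + f1) * (g0 + g1)) := by
    have := mul_nonneg (sub_nonneg.2 hf) (sub_nonneg.2 hg)
    have ha : a = b + L - M := by linarith
    subst ha
    nlinarith
  have : f1 * g0 * D * ((b + L) / L) + f0 * g1 * (D * b / M) * ((b + L) / b) + f0 * g0 * (D * (M - b) / M) * ((b + L) / L)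
    = D / (M * L) * ((b + L) * (M * (f1 * g0) + L * (f0 * g1) + (M - b) * (f0 * g0))) := by
    field_simp
  calc _ ≤ D / (M * L) * ((b + L) * (M * (f1 * g0) + L * (f0 * g1) + (M - b) * (f0 * g0))) := by
        rw [← this]; linarith
    _ ≤ D / (M * L) * (M * L * ((f0 + f1) * (g0 + g1))) := by gcongr
    _ = _ := by field_simp

theorem negcor (U : Finset ℕ) : ∀ (a b : ℕ) (F G : Finset (Finset ℕ)),
    F ⊆ U.powersetCard a → G ⊆ U.powersetCard b → ShOn U F → ShOn U G →
    dp F G * U.card.choose b ≤ F.card * G.card * (U.card - a).choose b := by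
  classical
  induction U using Finset.induction_on_min with
  | empty =>
    intro a b F G hF hG _ _
    rcases Nat.eq_zero_or_pos b with rfl | hb
    · simpa using dp_le F G
    · simp [Nat.choose_eq_zero_of_lt hb]
  | insert z U hz ih =>
    intro a b F G hF hG sF sG
    have hzU : z ∉ U := fun h => lt_irrefl _ (hz z h)
    have hcard : (insert z U).card = U.card + 1 := card_insert_of_notMem hzU
    rcases a with _ | a
    · simp only [Nat.sub_zero]
      exact Nat.mul_le_mul_right _ (dp_le F G)
    rcases b with _ | b
    · simpa using dp_le F G
    by_cases hsm : U.card + 1 < (a + 1) + (b + 1)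
    · have : dp F G = 0 := by
        unfold dp
        rw [card_eq_zero, filter_eq_empty_iff]
        intro p hp hd
        rw [mem_product] at hp
        have h1 := mem_powersetCard.1 (hF hp.1)
        have h2 := mem_powersetCard.1 (hG hp.2)
        have := card_le_card (union_subset h1.1 h2.1)
        rw [card_union_of_disjoint hd, hcard] at this
        omega
      simp [this]
    push Not at hsm
    have dF := split_card hzU hF
    have dG := split_card hzU hG
    have lF := lym (f0_sub hF) (Lk_sub F {z} U a) (shad01 hz hF sF)
    have lG := lym (f0_sub hG) (Lk_sub G {z} U b) (shad01 hz hG sG)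
    have sF' := sF.mono (subset_insert z U)
    have sG' := sG.mono (subset_insert z U)
    have dz : Disjoint {z} U := by simpa using hzU
    have p1 := ih a (b+1) _ _ (Lk_sub F {z} U a) (f0_sub hG) (sF'.link dz a) (sG'.filter hzU)
    have p2 := ih (a+1) b _ _ (f0_sub hF) (Lk_sub G {z} U b) (sF'.filter hzU) (sG'.link dz b)
    have p3 := ih (a+1) (b+1) _ _ (f0_sub hF) (f0_sub hG) (sF'.filter hzU) (sG'.filter hzU)
    have ps := dp_split hzU hF hG
    rw [dF, dG, hcard]
    refine (Nat.mul_le_mul_right _ ps).trans ?_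
    generalize dp (Lk F {z} U a) (G.filter (fun A => z ∉ A)) = P10 at *
    generalize dp (F.filter (fun A => z ∉ A)) (Lk G {z} U b) = P01 at *
    generalize dp (F.filter (fun A => z ∉ A)) (G.filter (fun A => z ∉ A)) = P00 at *
    generalize (F.filter (fun A => z ∉ A)).card = f0 at *
    generalize (G.filter (fun A => z ∉ A)).card = g0 at *
    generalize (Lk F {z} U a).card = f1 at *
    generalize (Lk G {z} U b).card = g1 at *
    generalize U.card = n at *
    obtain ⟨M, rfl⟩ : ∃ M, n = a + M := ⟨n - a, by omega⟩
    obtain ⟨m, rfl⟩ : ∃ m, M = m + 1 := ⟨M - 1, by omega⟩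
    have e1 : a + (m + 1) - (a + 1) = m := by omega
    have e2 : a + (m + 1) - a = m + 1 := by omega
    have e3 : a + (m + 1) + 1 - (a + 1) = m + 1 := by omega
    rw [e1] at p2 p3
    rw [e2] at p1 lF
    rw [e3, Nat.choose_succ_succ]
    have c1 : (a + (m + 1)).choose (b + 1) * (b + 1) = (a + (m + 1)).choose b * (a + (m + 1) - b) :=
      Nat.choose_succ_right_eq _ _
    have c2 := Nat.add_one_mul_choose_eq m b
    have c3 : (m + 1).choose (b + 1) = m.choose b + m.choose (b + 1) := Nat.choose_succ_succ _ _
    have hc : 0 < (a + (m+1)).choose (b+1) := Nat.choose_pos (by omega)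
    have hc' : 0 < (a + (m+1)).choose b := Nat.choose_pos (by omega)
    obtain ⟨L, hL⟩ : ∃ L, a + (m + 1) = b + L := ⟨a + (m + 1) - b, by omega⟩
    have hL' : a + (m + 1) - b = L := by omega
    have hL0 : 0 < L := by omega
    rw [hL'] at c1 lG
    generalize (a + (m + 1)).choose (b + 1) = c at *
    generalize (a + (m + 1)).choose b = c' at *
    generalize (m + 1).choose (b + 1) = D at *
    generalize m.choose (b + 1) = Y at *
    generalize m.choose b = X at *
    have := @negcor_num f0 f1 g0 g1 P10 P01 P00 c c' D X Y (a+1) (b+1) (m+1) L (by exact_mod_cast hc)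
      (by exact_mod_cast hc') (by positivity) (by exact_mod_cast hL0) (by positivity)
      (by have : (a : ℝ) + (m + 1) = b + L := by exact_mod_cast hL
          linarith) (by positivity) (by exact_mod_cast c1.symm) (by exact_mod_cast (by linarith))
      (by have h2 : ((m : ℝ) + 1) * X = D * (b + 1) := by exact_mod_cast c2
          have h3 : (D : ℝ) = X + Y := by exact_mod_cast c3
          have : (Y : ℝ) = D - X := by linarith
          rw [this]; linear_combination -h2)
      (by exact_mod_cast lF) (by exact_mod_cast lG) (by exact_mod_cast p1) (by exact_mod_cast p2)
      (by exact_mod_cast p3)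
    exact_mod_cast this

end

section
set_option linter.unusedVariables false

theorem shadow_bound_zero {s : ℕ} {U : Finset ℕ} {B E : Finset (Finset ℕ)}
    (hB : B ⊆ U.powersetCard 1) (h : ShadIn B E) (hs : NoM B s) : B.card ≤ s * E.card := by
  rcases B.eq_empty_or_nonempty with rfl | ⟨A, hA⟩
  · simp
  have h1 : B.card ≤ s := by
    apply hs B subset_rfl
    intro A hA A' hA' hne
    obtain ⟨x, rfl⟩ := card_eq_one.1 (mem_powersetCard.1 (hB hA)).2
    obtain ⟨y, rfl⟩ := card_eq_one.1 (mem_powersetCard.1 (hB hA')).2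
    simp only [disjoint_singleton]
    intro h; exact hne (by rw [h])
  obtain ⟨x, rfl⟩ := card_eq_one.1 (mem_powersetCard.1 (hB hA)).2
  have h2 : 0 < E.card := card_pos.2 ⟨_, h _ hA x (by simp)⟩
  nlinarith

theorem NoM_lastlink {s k z : ℕ} {U : Finset ℕ} (hz : ∀ x ∈ U, x < z) {B : Finset (Finset ℕ)}
    (hU : (k + 1) * (s + 1) ≤ U.card + 1) (hsh : ShOn (insert z U) B) (hs : NoM B s) :
    NoM (Lk B {z} U k) s := by
  classical
  have hzU : z ∉ U := fun h => lt_irrefl _ (hz z h)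
  intro M hM hd
  by_contra hlt
  push Not at hlt
  obtain ⟨M', hM'M, hM'⟩ := exists_subset_card_eq (show s + 1 ≤ M.card by omega)
  have hM'L := hM'M.trans hM
  set V := (insert z U) \ M'.biUnion id with hV
  have hVc : s + 1 ≤ V.card := by
    have h1 : (M'.biUnion id).card ≤ (s + 1) * k := by
      rw [← hM']
      refine card_biUnion_le_card_mul _ _ _ ?_
      intro A hA
      exact (mem_Lk.1 (hM'L hA)).2.1.le
    have h2 := le_card_sdiff (M'.biUnion id) (insert z U)
    rw [card_insert_of_notMem hzU] at h2
    have : (k + 1) * (s + 1) = (s + 1) * k + (s + 1) := by ring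
    rw [hV]
    omega
  obtain ⟨g, hg⟩ : ∃ g : M' ↪ V, True := by
    have : Fintype.card M' ≤ Fintype.card V := by
      simp only [Fintype.card_coe]; omega
    exact ⟨(Function.Embedding.nonempty_of_card_le this).some, trivial⟩
  have hgV : ∀ A : M', (g A : ℕ) ∈ insert z U ∧ ∀ A' ∈ M', (g A : ℕ) ∉ A' := by
    intro A
    have := (g A).2
    simp only [hV, mem_sdiff, mem_biUnion, id, not_exists, not_and] at this
    exact this
  refine hs.indexed (ι := M') (by simp; omega) (fun A => insert (g A : ℕ) A.1) ?_ (fun i => insert_nonempty _ _) ?_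
  · intro A
    have hA := mem_Lk.1 (hM'L A.2)
    have hzA : z ∉ A.1 := fun h => hzU (hA.1 h)
    rw [← insert_eq] at hA
    have h1 := hgV A
    rw [mem_insert] at h1
    rcases h1.1 with h2 | h2
    · show insert (g A : ℕ) A.1 ∈ B
      rw [h2]; exact hA.2.2
    · have := hsh _ hA.2.2 z (mem_insert_self _ _) (g A) (mem_insert_of_mem h2) (hz _ h2)
        (by rw [mem_insert]; push Not; exact ⟨(hz _ h2).ne, h1.2 _ A.2⟩)
      rwa [erase_insert hzA] at this
  · intro A A' hne
    have h1 : Disjoint A.1 A'.1 := hd (hM'M A.2) (hM'M A'.2) (fun h => hne (Subtype.ext h))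
    rw [disjoint_insert_left, disjoint_insert_right, mem_insert]
    push Not
    refine ⟨⟨?_, (hgV A).2 _ A'.2⟩, (hgV A').2 _ A.2, h1⟩
    intro h
    exact hne (g.injective (Subtype.ext h))

theorem shadow_bound (s : ℕ) (U : Finset ℕ) : ∀ (k : ℕ) (B E : Finset (Finset ℕ)),
    B ⊆ U.powersetCard (k + 1) → E ⊆ U.powersetCard k → ShadIn B E → ShOn U B → NoM B s →
    B.card ≤ s * E.card := by
  classical
  induction U using Finset.induction_on_max with
  | empty =>
    intro k B E hB _ _ _ _
    have : B = ∅ := by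
      rw [powersetCard_eq_empty.2 (by simp)] at hB
      exact subset_empty.1 hB
    simp [this]
  | insert z U hz ih =>
    intro k B E hB hE hsh hS hs
    rcases k with _ | k
    · exact shadow_bound_zero hB hsh hs
    have hzU : z ∉ U := fun h => lt_irrefl _ (hz z h)
    have hcard : (insert z U).card = U.card + 1 := card_insert_of_notMem hzU
    have dz : Disjoint {z} U := by simpa using hzU
    by_cases hbig : (k + 1 + 1) * (s + 1) ≤ U.card + 1
    · have h0 := ih (k + 1) (B.filter (fun A => z ∉ A)) (E.filter (fun A => z ∉ A)) (f0_sub hB) (f0_sub hE)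
        (by
          intro A hA x hx
          rw [mem_filter] at hA ⊢
          exact ⟨hsh A hA.1 x hx, fun h => hA.2 (mem_of_mem_erase h)⟩)
        ((hS.mono (subset_insert _ _)).filter hzU) (hs.mono (filter_subset _ _))
      have h1 := ih k (Lk B {z} U (k+1)) (Lk E {z} U k) (Lk_sub _ _ _ _) (Lk_sub _ _ _ _)
        (by
          intro A hA x hx
          rw [mem_Lk] at hA ⊢
          refine ⟨(erase_subset _ _).trans hA.1, by rw [card_erase_of_mem hx]; omega, ?_⟩
          have := hsh _ hA.2.2 x (mem_union_right _ hx)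
          convert this using 1
          have : x ≠ z := fun h => hzU (hA.1 (h ▸ hx))
          rw [erase_union_distrib, erase_eq_of_notMem (s := {z})]
          simpa using this)
        ((hS.mono (subset_insert _ _)).link dz (k+1)) (NoM_lastlink hz hbig hS hs)
      rw [split_card hzU hB, split_card hzU hE, mul_add]
      omega
    · have := lym hB hE hsh
      push Not at hbig
      rw [hcard] at this
      have h2 : U.card + 1 - (k + 1) ≤ s * (k + 1 + 1) := by
        have : (k + 1 + 1) * (s + 1) = s * (k + 1 + 1) + (k + 1) + 1 := by ring
        omega
      have h3 : B.card * (k + 1 + 1) ≤ (s * E.card) * (k + 1 + 1) := by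
        calc _ ≤ _ := this
          _ ≤ E.card * (s * (k + 1 + 1)) := Nat.mul_le_mul_left _ h2
          _ = _ := by ring
      exact Nat.le_of_mul_le_mul_right h3 (by omega)

/-! ### walks -/

/-- walk condition with offset `o` -/
def Wk (s o : ℕ) (K : Finset ℕ) : Prop := ∀ m, (s + 1) * (K.filter (· < o + m)).card ≤ m

theorem dominate {U : Finset ℕ} {F : Finset (Finset ℕ)} (hS : ShOn U F) {K' : Finset ℕ} (hK'U : K' ⊆ U) :
    ∀ (d : ℕ) (K : Finset ℕ), (K \ K').card = d → K ∈ F → K.card = K'.card →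
    (∀ m, (K.filter (· < m)).card ≤ (K'.filter (· < m)).card) → K' ∈ F := by
  classical
  intro d
  induction d with
  | zero =>
    intro K hd hK hc hdom
    have : K = K' := by
      rw [card_eq_zero, sdiff_eq_empty_iff_subset] at hd
      exact eq_of_subset_of_card_le hd hc.ge
    exact this ▸ hK
  | succ d ih =>
    intro K hd hK hc hdom
    have hne : (K \ K').Nonempty := card_pos.1 (by omega)
    have hne' : (K' \ K).Nonempty := by
      apply card_pos.1
      have := card_sdiff_add_card_inter K K'
      have h2 := card_sdiff_add_card_inter K' K
      rw [inter_comm] at h2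
      omega
    set x := (K \ K').min' hne with hx
    set y := (K' \ K).min' hne' with hy
    have hxm := mem_sdiff.1 ((K \ K').min'_mem hne)
    have hym := mem_sdiff.1 ((K' \ K).min'_mem hne')
    rw [← hx] at hxm
    rw [← hy] at hym
    have hxmin : ∀ z ∈ K, z < x → z ∈ K' := by
      intro z hz hzx
      by_contra h
      exact absurd (min'_le _ z (mem_sdiff.2 ⟨hz, h⟩)) (by rw [← hx]; omega)
    have hymin : ∀ z ∈ K', z < y → z ∈ K := by
      intro z hz hzx
      by_contra h
      exact absurd (min'_le _ z (mem_sdiff.2 ⟨hz, h⟩)) (by rw [← hy]; omega)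
    have hxy : x ≠ y := fun h => hym.2 (h ▸ hxm.1)
    have hlt : y < x := by
      by_contra hge
      have hxy' : x < y := by omega
      have h1 := hdom (x + 1)
      have h2 : K'.filter (· < x + 1) ⊂ K.filter (· < x + 1) := by
        rw [ssubset_iff_of_subset]
        · exact ⟨x, by simp [hxm.1], by simp [hxm.2]⟩
        · intro z hz
          rw [mem_filter] at hz ⊢
          exact ⟨hymin z hz.1 (by omega), hz.2⟩
      have := card_lt_card h2
      omega
    refine ih (insert y (K.erase x)) ?_ (hS K hK x hxm.1 y (hK'U hym.1) hlt hym.2) ?_ ?_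
    · have : insert y (K.erase x) \ K' = (K \ K').erase x := by
        ext z
        simp only [mem_sdiff, mem_insert, mem_erase]
        constructor
        · rintro ⟨h | h, h'⟩
          · exact absurd (h ▸ hym.1) h'
          · tauto
        · tauto
      rw [this, card_erase_of_mem (mem_sdiff.2 hxm)]
      omega
    · rw [← hc]; exact card_mv ⟨hxm.1, hym.2⟩
    · intro m
      by_cases hmx : m ≤ x
      · apply card_le_card
        intro z hz
        simp only [mem_filter, mem_insert, mem_erase] at hz ⊢
        refine ⟨?_, hz.2⟩
        rcases hz.1 with h | h
        · rw [h]; exact hym.1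
        · exact hxmin z h.2 (by omega)
      · refine le_trans (le_of_eq ?_) (hdom m)
        have : (insert y (K.erase x)).filter (· < m) = mv x y (K.filter (· < m)) := by
          ext z
          simp only [mv, mem_filter, mem_insert, mem_erase]
          constructor
          · tauto
          · rintro (h | h)
            · subst h; exact ⟨Or.inl rfl, by omega⟩
            · tauto
        rw [this, card_mv]
        exact ⟨mem_filter.2 ⟨hxm.1, by omega⟩, fun h => hym.2 (mem_filter.1 h).1⟩

theorem no_walk {s n k : ℕ} {F : Finset (Finset ℕ)} (hF : F ⊆ (range n).powersetCard k) (hk : 0 < k)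
    (hS : ShOn (range n) F) (hs : NoM F s) : ∀ K ∈ F, ¬ Wk s 0 K := by
  classical
  intro K hK hW
  have hK' := mem_powersetCard.1 (hF hK)
  have hkn : (s + 1) * k ≤ n := by
    have := hW n
    rw [filter_true_of_mem, hK'.2] at this
    · exact this
    · intro x hx
      have := mem_range.1 (hK'.1 hx)
      omega
  set f : Fin (s + 1) → Finset ℕ := fun i => (range k).image (fun j => j * (s + 1) + i) with hf
  have hinj : ∀ i : Fin (s+1), Function.Injective (fun j => j * (s + 1) + (i : ℕ)) := by
    intro i a b h
    simp only [Nat.add_right_cancel_iff] at h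
    exact Nat.eq_of_mul_eq_mul_right (by omega) h
  have hcard : ∀ i, (f i).card = k := by
    intro i
    rw [hf]
    simp only
    rw [card_image_of_injective _ (hinj i), card_range]
  refine hs.indexed (ι := Fin (s + 1)) (by simp) f ?_ ?_ ?_
  · intro i
    refine dominate hS ?_ _ K rfl hK (by rw [hcard, hK'.2]) ?_
    · intro x hx
      simp only [hf, mem_image, mem_range] at hx ⊢
      obtain ⟨j, hj, rfl⟩ := hx
      have : (j + 1) * (s + 1) ≤ k * (s + 1) := Nat.mul_le_mul_right _ hj
      have := i.2
      nlinarith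
    · intro m
      have h1 := hW m
      rw [zero_add] at h1
      set c := (K.filter (· < m)).card with hc
      have hck : c ≤ k := by rw [← hK'.2]; exact card_filter_le _ _
      have : (range c).image (fun j => j * (s + 1) + (i : ℕ)) ⊆ (f i).filter (· < m) := by
        intro x hx
        simp only [mem_image, mem_range] at hx
        obtain ⟨j, hj, rfl⟩ := hx
        rw [mem_filter]
        refine ⟨mem_image.2 ⟨j, mem_range.2 (by omega), rfl⟩, ?_⟩
        have : (j + 1) * (s + 1) ≤ c * (s + 1) := Nat.mul_le_mul_right _ hj
        have := i.2
        nlinarith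
      have h2 := card_le_card this
      rwa [card_image_of_injective _ (hinj i), card_range] at h2
  · intro i
    rw [← card_pos, hcard]; exact hk
  · intro i j hij
    rw [disjoint_left]
    intro x hx hx'
    simp only [hf, mem_image, mem_range] at hx hx'
    obtain ⟨a, _, rfl⟩ := hx
    obtain ⟨b, _, hb⟩ := hx'
    apply hij
    have h1 : (a * (s + 1) + (i : ℕ)) % (s + 1) = i := by
      rw [Nat.mul_add_mod', Nat.mod_eq_of_lt i.2]
    have h2 : (b * (s + 1) + (j : ℕ)) % (s + 1) = j := by
      rw [Nat.mul_add_mod', Nat.mod_eq_of_lt j.2]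
    apply Fin.ext
    rw [← h1, ← h2, hb]

open Classical in
noncomputable def wset (s o m k : ℕ) : Finset (Finset ℕ) := ((Ico o (o + m)).powersetCard k).filter (Wk s o)

theorem mem_wset {s o m k : ℕ} {K : Finset ℕ} : K ∈ wset s o m k ↔ K ⊆ Ico o (o + m) ∧ K.card = k ∧ Wk s o K := by
  simp [wset, mem_powersetCard, and_assoc]

theorem wset_zero (s o m : ℕ) : (wset s o m 0).card = 1 := by
  have : wset s o m 0 = {∅} := by
    ext K
    rw [mem_wset, mem_singleton, card_eq_zero]
    constructor
    · tauto
    · rintro rfl; simp [Wk]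
  simp [this]

theorem wset_empty {s o m k : ℕ} (h : m < (s + 1) * k) : (wset s o m k).card = 0 := by
  rw [card_eq_zero, eq_empty_iff_forall_notMem]
  intro K hK
  rw [mem_wset] at hK
  have := hK.2.2 m
  rw [filter_true_of_mem, hK.2.1] at this
  · omega
  · intro x hx
    exact (mem_Ico.1 (hK.1 hx)).2

theorem wset_succ {s o m k : ℕ} (h : (s + 1) * (k + 1) ≤ m + 1) :
    (wset s o (m + 1) (k + 1)).card = (wset s o m (k + 1)).card + (wset s o m k).card := by
  classical
  have hI : Ico o (o + (m + 1)) = insert (o + m) (Ico o (o + m)) := by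
    ext x; simp only [mem_Ico, mem_insert]; omega
  have hz : o + m ∉ Ico o (o + m) := by simp
  have hsub : wset s o (m+1) (k+1) ⊆ (insert (o + m) (Ico o (o + m))).powersetCard (k+1) := by
    intro K hK
    rw [mem_wset, hI] at hK
    exact mem_powersetCard.2 ⟨hK.1, hK.2.1⟩
  rw [split_card hz hsub]
  congr 2
  · ext K
    constructor
    · intro hK
      have h1 := mem_powersetCard.1 (f0_sub hsub hK)
      rw [mem_filter, mem_wset] at hK
      exact mem_wset.2 ⟨h1.1, h1.2, hK.1.2.2⟩
    · intro hK
      rw [mem_wset] at hK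
      rw [mem_filter, mem_wset, hI]
      exact ⟨⟨hK.1.trans (subset_insert _ _), hK.2⟩, fun h => hz (hK.1 h)⟩
  · ext K
    rw [mem_Lk, mem_wset, mem_wset, ← insert_eq, hI]
    constructor
    · rintro ⟨h1, h2, h3, h4, h5⟩
      refine ⟨h1, h2, fun j => le_trans (Nat.mul_le_mul_left _ ?_) (h5 j)⟩
      exact card_le_card (filter_subset_filter _ (subset_insert _ _))
    · rintro ⟨h1, h2, h3⟩
      have hzK : o + m ∉ K := fun h => hz (h1 h)
      refine ⟨h1, h2, insert_subset_insert _ h1, by rw [card_insert_of_notMem hzK, h2], fun j => ?_⟩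
      by_cases hj : j ≤ m
      · rw [filter_insert, if_neg (by omega)]
        exact h3 j
      · refine le_trans (Nat.mul_le_mul_left _ (card_filter_le _ _)) ?_
        rw [card_insert_of_notMem hzK, h2]
        omega

theorem wset_card (s o : ℕ) : ∀ m k : ℕ, (s + 1) * (k + 1) ≤ m + 1 →
    (wset s o m (k + 1)).card + s * m.choose k = m.choose (k + 1) := by
  intro m
  induction m with
  | zero =>
    intro k hk
    have hk0 : k = 0 := by nlinarith
    subst hk0
    have : s = 0 := by omega
    subst this
    simp [wset_empty]
  | succ m ih =>
    intro k hk
    by_cases hb : (s + 1) * (k + 1) ≤ m + 1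
    · rw [wset_succ hb, Nat.choose_succ_succ' m k]
      rcases k with _ | k
      · have := ih 0 hb
        rw [wset_zero]
        simp only [Nat.choose_zero_right, zero_add] at this ⊢
        omega
      · have h1 := ih (k + 1) hb
        have h2 := ih k (by nlinarith)
        rw [Nat.choose_succ_succ' m k, mul_add]
        omega
    · rw [wset_empty (by omega), zero_add]
      have h1 := Nat.choose_succ_right_eq (m + 1) k
      have h2 : m + 1 - k = s * (k + 1) := by
        have : (s + 1) * (k + 1) = s * (k + 1) + (k + 1) := by ring
        omega
      rw [h2] at h1
      have : (s * (m+1).choose k) * (k + 1) = (m+1).choose (k+1) * (k + 1) := by rw [h1]; ring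
      exact Nat.eq_of_mul_eq_mul_right (by omega) this

end

section
set_option linter.unusedVariables false

/-- the set of points whose position lies in `P` -/
def bk {U : Finset ℕ} {N : ℕ} (σ : U ≃ Fin N) (P : Finset (Fin N)) : Finset ℕ :=
  (univ.filter (fun v : U => σ v ∈ P)).map (Function.Embedding.subtype _)

theorem mem_bk {U : Finset ℕ} {N : ℕ} {σ : U ≃ Fin N} {P : Finset (Fin N)} {x : ℕ} :
    x ∈ bk σ P ↔ ∃ h : x ∈ U, σ ⟨x, h⟩ ∈ P := by
  simp [bk]

theorem bk_sub {U : Finset ℕ} {N : ℕ} (σ : U ≃ Fin N) (P : Finset (Fin N)) : bk σ P ⊆ U := by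
  intro x hx
  exact (mem_bk.1 hx).1

theorem bk_card {U : Finset ℕ} {N : ℕ} (σ : U ≃ Fin N) (P : Finset (Fin N)) : (bk σ P).card = P.card := by
  rw [bk, card_map]
  refine card_bij (fun v _ => σ v) ?_ ?_ ?_
  · intro v hv; simpa using hv
  · intro a _ b _ h; exact σ.injective h
  · intro p hp; exact ⟨σ.symm p, by simpa using hp, by simp⟩

theorem bk_disj {U : Finset ℕ} {N : ℕ} (σ : U ≃ Fin N) {P Q : Finset (Fin N)} (h : Disjoint P Q) :
    Disjoint (bk σ P) (bk σ Q) := by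
  rw [disjoint_left]
  intro x hx hx'
  obtain ⟨h1, h2⟩ := mem_bk.1 hx
  obtain ⟨_, h4⟩ := mem_bk.1 hx'
  exact disjoint_left.1 h h2 h4

theorem exists_perm {U A B A' B' : Finset ℕ} (hA : A ⊆ U) (hB : B ⊆ U) (hA' : A' ⊆ U) (hB' : B' ⊆ U)
    (hd : Disjoint A B) (hd' : Disjoint A' B') (hc : A.card = A'.card) (hc' : B.card = B'.card) :
    ∃ τ : U ≃ U, ∀ v : U, ((τ v : ℕ) ∈ A' ↔ (v : ℕ) ∈ A) ∧ ((τ v : ℕ) ∈ B' ↔ (v : ℕ) ∈ B) := by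
  classical
  let col : Finset ℕ → Finset ℕ → U → Fin 3 := fun A B v => if (v : ℕ) ∈ A then 0 else if (v : ℕ) ∈ B then 1 else 2
  have e0 : ∀ A B : Finset ℕ, ∀ v : U, col A B v = 0 ↔ (v : ℕ) ∈ A := by
    intro A B v; simp only [col]; split_ifs <;> simp_all
  have e1 : ∀ A B : Finset ℕ, Disjoint A B → ∀ v : U, col A B v = 1 ↔ (v : ℕ) ∈ B := by
    intro A B hd v; simp only [col]
    have : (v : ℕ) ∈ A → (v : ℕ) ∉ B := fun h => disjoint_left.1 hd h
    split_ifs <;> simp_all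
  have e2 : ∀ A B : Finset ℕ, ∀ v : U, col A B v = 2 ↔ (v : ℕ) ∈ U \ (A ∪ B) := by
    intro A B v; simp only [col]; split_ifs <;> simp_all
  have cc : ∀ C : Finset ℕ, C ⊆ U → (univ.filter (fun v : U => (v : ℕ) ∈ C)).card = C.card := by
    intro C hC
    refine card_bij (fun v _ => (v : ℕ)) ?_ ?_ ?_
    · intro v hv; simpa using hv
    · intro a _ b _ h; exact Subtype.ext h
    · intro x hx; exact ⟨⟨x, hC hx⟩, by simpa using hx, rfl⟩
  have key : ∀ c : Fin 3, Nonempty ({v // col A B v = c} ≃ {v // col A' B' v = c}) := by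
    intro c
    apply Fintype.card_eq.1
    rw [Fintype.card_subtype, Fintype.card_subtype]
    have hc3 : c = 0 ∨ c = 1 ∨ c = 2 := by fin_cases c <;> simp
    rcases hc3 with rfl | rfl | rfl
    · simp only [e0]
      rw [cc A hA, cc A' hA', hc]
    · simp only [e1 A B hd, e1 A' B' hd']
      rw [cc B hB, cc B' hB', hc']
    · simp only [e2]
      rw [cc _ sdiff_subset, cc _ sdiff_subset, card_sdiff_of_subset (union_subset hA hB),
        card_sdiff_of_subset (union_subset hA' hB'), card_union_of_disjoint hd, card_union_of_disjoint hd', hc, hc']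
  let τ : U ≃ U := Equiv.ofFiberEquiv (fun c => (key c).some)
  have hτ : ∀ v, col A' B' (τ v) = col A B v := fun v => Equiv.ofFiberEquiv_map _ v
  refine ⟨τ, fun v => ⟨?_, ?_⟩⟩
  · rw [← e0 A' B', hτ, e0]
  · rw [← e1 A' B' hd', hτ, e1 A B hd]

theorem fib_le {U : Finset ℕ} {N : ℕ} {P Q : Finset (Fin N)} {A B A' B' : Finset ℕ} (hA : A ⊆ U) (hB : B ⊆ U) (hA' : A' ⊆ U) (hB' : B' ⊆ U)
    (hd : Disjoint A B) (hd' : Disjoint A' B') (hc : A.card = A'.card) (hc' : B.card = B'.card) :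
    (univ.filter (fun σ : U ≃ Fin N => bk σ P = A ∧ bk σ Q = B)).card ≤
    (univ.filter (fun σ : U ≃ Fin N => bk σ P = A' ∧ bk σ Q = B')).card := by
  classical
  obtain ⟨τ, hτ⟩ := exists_perm hA' hB' hA hB hd' hd hc.symm hc'.symm
  refine card_le_card_of_injOn (fun σ => τ.trans σ) ?_ ?_
  · intro σ hσ
    simp only [coe_filter, mem_univ, true_and, Set.mem_ofPred_eq] at hσ ⊢
    obtain ⟨h1, h2⟩ := hσ
    constructor
    · ext x
      rw [mem_bk]
      constructor
      · rintro ⟨h, hx⟩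
        rw [Equiv.trans_apply] at hx
        rw [← (hτ ⟨x, h⟩).1, ← h1, mem_bk]
        exact ⟨(τ ⟨x, h⟩).2, hx⟩
      · intro hx
        have h := hA' hx
        rw [← (hτ ⟨x, h⟩).1, ← h1, mem_bk] at hx
        exact ⟨h, hx.2⟩
    · ext x
      rw [mem_bk]
      constructor
      · rintro ⟨h, hx⟩
        rw [Equiv.trans_apply] at hx
        rw [← (hτ ⟨x, h⟩).2, ← h2, mem_bk]
        exact ⟨(τ ⟨x, h⟩).2, hx⟩
      · intro hx
        have h := hB' hx
        rw [← (hτ ⟨x, h⟩).2, ← h2, mem_bk] at hx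
        exact ⟨h, hx.2⟩
  · intro σ _ σ' _ h
    have := congrArg (fun e => τ.symm.trans e) h
    simpa [← Equiv.trans_assoc] using this

theorem dp_all (U : Finset ℕ) (a b : ℕ) : dp (U.powersetCard a) (U.powersetCard b) =
    U.card.choose a * (U.card - a).choose b := by
  classical
  unfold dp
  rw [card_eq_sum_card_fiberwise (f := Prod.fst) (t := U.powersetCard a)]
  · rw [sum_congr rfl (g := fun _ => (U.card - a).choose b)]
    · simp
    · intro A hA
      have hA' := mem_powersetCard.1 hA
      rw [← hA'.2, ← card_sdiff_of_subset hA'.1, ← card_powersetCard]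
      refine card_bij (fun p _ => p.2) ?_ ?_ ?_
      · intro p hp
        simp only [mem_filter, mem_product, mem_powersetCard] at hp ⊢
        refine ⟨?_, hp.1.1.2.2⟩
        rw [subset_sdiff]
        exact ⟨hp.1.1.2.1, hp.2 ▸ hp.1.2.symm⟩
      · intro p hp q hq h
        simp only [mem_filter] at hp hq
        exact Prod.ext (hp.2.trans hq.2.symm) h
      · intro B hB
        rw [mem_powersetCard, subset_sdiff] at hB
        refine ⟨(A, B), ?_, rfl⟩
        simp only [mem_filter, mem_product, mem_powersetCard]
        exact ⟨⟨⟨⟨hA'.1, by first | trivial | exact hA'.2⟩, hB.1.1, hB.2⟩, hB.1.2.symm⟩, trivial⟩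
  · intro p hp
    simp only [coe_filter, mem_product, Set.mem_ofPred_eq] at hp
    exact hp.1.1

theorem avg_pair {U : Finset ℕ} {N : ℕ} (hN : U.card = N) {P Q : Finset (Fin N)} (hPQ : Disjoint P Q)
    {F G : Finset (Finset ℕ)} (hF : F ⊆ U.powersetCard P.card) (hG : G ⊆ U.powersetCard Q.card) :
    (univ.filter (fun σ : U ≃ Fin N => bk σ P ∈ F ∧ bk σ Q ∈ G)).card *
      (N.choose P.card * (N - P.card).choose Q.card) = dp F G * N.factorial := by
  classical
  -- value of a fiber
  obtain ⟨c, hc⟩ : ∃ c : ℕ, ∀ A ∈ U.powersetCard P.card, ∀ B ∈ U.powersetCard Q.card, Disjoint A B →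
      (univ.filter (fun σ : U ≃ Fin N => bk σ P = A ∧ bk σ Q = B)).card = c := by
    have hne : Nonempty (U ≃ Fin N) := ⟨Fintype.equivOfCardEq (by simp [hN])⟩
    obtain ⟨σ⟩ := hne
    refine ⟨(univ.filter (fun σ' : U ≃ Fin N => bk σ' P = bk σ P ∧ bk σ' Q = bk σ Q)).card, ?_⟩
    intro A hA B hB hd
    rw [mem_powersetCard] at hA hB
    have hc1 : A.card = (bk σ P).card := by rw [bk_card, hA.2]
    have hc2 : B.card = (bk σ Q).card := by rw [bk_card, hB.2]
    apply le_antisymm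
    · exact fib_le hA.1 hB.1 (bk_sub _ _) (bk_sub _ _) hd (bk_disj σ hPQ) hc1 hc2
    · exact fib_le (bk_sub _ _) (bk_sub _ _) hA.1 hB.1 (bk_disj σ hPQ) hd hc1.symm hc2.symm
  have gen : ∀ F G : Finset (Finset ℕ), F ⊆ U.powersetCard P.card → G ⊆ U.powersetCard Q.card →
      (univ.filter (fun σ : U ≃ Fin N => bk σ P ∈ F ∧ bk σ Q ∈ G)).card = dp F G * c := by
    intro F G hF hG
    rw [card_eq_sum_card_fiberwise (f := fun σ => (bk σ P, bk σ Q))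
      (t := (F ×ˢ G).filter (fun p => Disjoint p.1 p.2))]
    · unfold dp
      rw [card_eq_sum_ones, sum_mul]
      apply sum_congr rfl
      intro p hp
      rw [mem_filter, mem_product] at hp
      rw [one_mul, ← hc p.1 (hF hp.1.1) p.2 (hG hp.1.2) hp.2, filter_filter]
      congr 1
      ext σ
      simp only [mem_filter, mem_univ, true_and, Prod.ext_iff]
      constructor
      · tauto
      · rintro ⟨h1, h2⟩
        rw [h1, h2]; tauto
    · intro σ hσ
      simp only [coe_filter, mem_univ, true_and, Set.mem_ofPred_eq, mem_product] at hσ ⊢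
      exact ⟨hσ, bk_disj σ hPQ⟩
  have hall := gen _ _ subset_rfl subset_rfl
  rw [dp_all, filter_true_of_mem, card_univ, Fintype.card_equiv (Fintype.equivOfCardEq (by simp [hN])), hN] at hall
  · rw [gen F G hF hG]
    simp only [Fintype.card_coe, hN] at hall
    rw [hall]; ring
  · intro σ _
    simp only [mem_powersetCard]
    exact ⟨⟨bk_sub _ _, bk_card _ _⟩, bk_sub _ _, bk_card _ _⟩

theorem avg_single {U : Finset ℕ} {N : ℕ} (hN : U.card = N) {P : Finset (Fin N)}
    {F : Finset (Finset ℕ)} (hF : F ⊆ U.powersetCard P.card) :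
    (univ.filter (fun σ : U ≃ Fin N => bk σ P ∈ F)).card * N.choose P.card = F.card * N.factorial := by
  classical
  have h := avg_pair hN (P := P) (Q := ∅) (disjoint_empty_right _) hF (G := {∅}) (by simp)
  have h1 : dp F {∅} = F.card := by
    unfold dp
    rw [filter_true_of_mem]
    · simp
    · intro p hp
      simp only [mem_product, mem_singleton] at hp
      rw [hp.2]; exact disjoint_empty_right _
  have h2 : ∀ σ : U ≃ Fin N, bk σ ∅ = ∅ := by intro σ; simp [bk]
  simpa [h1, h2] using h

theorem avg_pair_le {U : Finset ℕ} {N : ℕ} (hN : U.card = N) {P Q : Finset (Fin N)} (hPQ : Disjoint P Q)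
    {F : Finset (Finset ℕ)} (hQ : Q.card = P.card) (hF : F ⊆ U.powersetCard P.card) (hS : ShOn U F) :
    (univ.filter (fun σ : U ≃ Fin N => bk σ P ∈ F ∧ bk σ Q ∈ F)).card * (N.choose P.card) ^ 2 ≤
      F.card ^ 2 * N.factorial := by
  have h := avg_pair hN hPQ hF (hQ ▸ hF)
  have h2 := negcor U _ _ F F hF hF hS hS
  rw [hQ] at h
  rw [hN] at h2
  have hpos : 0 < (N - P.card).choose P.card := by
    apply Nat.choose_pos
    have : (P ∪ Q).card ≤ N := by
      have := card_le_univ (P ∪ Q)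
      simpa using this
    rw [card_union_of_disjoint hPQ] at this
    omega
  apply Nat.le_of_mul_le_mul_right _ hpos
  calc _ = (_ * (N.choose P.card * (N - P.card).choose P.card)) * N.choose P.card := by ring
    _ = (dp F F * N.choose P.card) * N.factorial := by rw [h]; ring
    _ ≤ (F.card * F.card * (N - P.card).choose P.card) * N.factorial := Nat.mul_le_mul_right _ h2
    _ = _ := by ring

def pos (N l i : ℕ) : Finset (Fin N) := univ.filter (fun p : Fin N => (p : ℕ) / l = i)

theorem pos_card {N l i : ℕ} (hl : 0 < l) (h : (i + 1) * l ≤ N) : (pos N l i).card = l := by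
  have : (pos N l i).map Fin.valEmbedding = Ico (i * l) ((i + 1) * l) := by
    ext x
    simp only [pos, mem_map, mem_filter, mem_univ, true_and, Fin.valEmbedding_apply, mem_Ico]
    constructor
    · rintro ⟨p, hp, rfl⟩
      rw [Nat.div_eq_iff hl] at hp
      have : (i + 1) * l = i * l + l := by ring
      omega
    · intro hx
      refine ⟨⟨x, by omega⟩, ?_, rfl⟩
      rw [Nat.div_eq_iff hl]
      have : (i + 1) * l = i * l + l := by ring
      simp only
      omega
  rw [← card_map Fin.valEmbedding, this, Nat.card_Ico]
  have : (i + 1) * l = i * l + l := by ring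
  omega

theorem pos_disj {N l i j : ℕ} (h : i ≠ j) : Disjoint (pos N l i) (pos N l j) := by
  rw [disjoint_left]
  intro p hp hp'
  simp only [pos, mem_filter, mem_univ, true_and] at hp hp'
  omega

def xx {U : Finset ℕ} {N : ℕ} (l t : ℕ) (F : Finset (Finset ℕ)) (σ : U ≃ Fin N) : ℕ :=
  ((range t).filter (fun i => bk σ (pos N l i) ∈ F)).card

theorem xx_eq {U : Finset ℕ} {N : ℕ} (l t : ℕ) (F : Finset (Finset ℕ)) (σ : U ≃ Fin N) :
    (xx l t F σ : ℝ) = ∑ i ∈ range t, if bk σ (pos N l i) ∈ F then (1 : ℝ) else 0 := by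
  simp [xx]

noncomputable def Ex {Ω : Type*} [Fintype Ω] (f : Ω → ℝ) : ℝ := (∑ σ, f σ) / Fintype.card Ω

theorem Ex_mono {Ω : Type*} [Fintype Ω] {f g : Ω → ℝ} (h : ∀ σ, f σ ≤ g σ) : Ex f ≤ Ex g := by
  unfold Ex
  have := sum_le_sum (fun σ (_ : σ ∈ (univ : Finset Ω)) => h σ)
  gcongr
theorem Ex_add {Ω : Type*} [Fintype Ω] (f g : Ω → ℝ) : Ex (fun σ => f σ + g σ) = Ex f + Ex g := by
  unfold Ex; rw [sum_add_distrib, add_div]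
theorem Ex_mul {Ω : Type*} [Fintype Ω] (c : ℝ) (f : Ω → ℝ) : Ex (fun σ => c * f σ) = c * Ex f := by
  unfold Ex; rw [← mul_sum, mul_div_assoc]
theorem Ex_sum {Ω ι : Type*} [Fintype Ω] (s : Finset ι) (f : ι → Ω → ℝ) :
    Ex (fun σ => ∑ i ∈ s, f i σ) = ∑ i ∈ s, Ex (f i) := by
  unfold Ex; rw [sum_comm, sum_div]
theorem Ex_const {Ω : Type*} [Fintype Ω] [Nonempty Ω] (c : ℝ) : Ex (fun _ : Ω => c) = c := by
  unfold Ex; simp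

theorem mean_var {U : Finset ℕ} {N l t : ℕ} (hN : U.card = N) (hl : 0 < l) (ht : t * l ≤ N)
    {F : Finset (Finset ℕ)} (hF : F ⊆ U.powersetCard l) (hS : ShOn U F) {α : ℝ}
    (hα : α * N.choose l = F.card) (hlN : l ≤ N) :
    Ex (fun σ : U ≃ Fin N => (xx l t F σ : ℝ)) = α * t ∧
    Ex (fun σ : U ≃ Fin N => ((xx l t F σ : ℝ) - α * t) ^ 2) ≤ t * (α * (1 - α)) := by
  classical
  have hne : Nonempty (U ≃ Fin N) := ⟨Fintype.equivOfCardEq (by simp [hN])⟩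
  have hcardΩ : (Fintype.card (U ≃ Fin N) : ℝ) = N.factorial := by
    rw [Fintype.card_equiv hne.some]; simp [hN]
  have hfpos : (0 : ℝ) < N.factorial := by exact_mod_cast N.factorial_pos
  have hC : (0 : ℝ) < N.choose l := by exact_mod_cast Nat.choose_pos hlN
  have hpc : ∀ i ∈ range t, (pos N l i).card = l := by
    intro i hi
    apply pos_card hl
    exact le_trans (Nat.mul_le_mul_right _ (mem_range.1 hi)) ht
  have hs : ∀ i ∈ range t, Ex (fun σ : U ≃ Fin N => if bk σ (pos N l i) ∈ F then (1 : ℝ) else 0) = α := by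
    intro i hi
    have h := avg_single hN (P := pos N l i) (F := F) (by rw [hpc i hi]; exact hF)
    rw [hpc i hi] at h
    unfold Ex
    rw [hcardΩ, div_eq_iff hfpos.ne', sum_boole]
    have h' : ((univ.filter (fun σ : U ≃ Fin N => bk σ (pos N l i) ∈ F)).card : ℝ) * N.choose l = F.card * N.factorial := by
      exact_mod_cast h
    rw [← hα] at h'
    apply mul_right_cancel₀ hC.ne'
    rw [h']; ring
  have hp : ∀ i ∈ range t, ∀ j ∈ range t, i ≠ j → Ex (fun σ : U ≃ Fin N => (if bk σ (pos N l i) ∈ F then (1 : ℝ) else 0) *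
      (if bk σ (pos N l j) ∈ F then (1 : ℝ) else 0)) ≤ α ^ 2 := by
    intro i hi j hj hij
    have h := avg_pair_le hN (P := pos N l i) (Q := pos N l j) (F := F) (pos_disj hij) (by rw [hpc i hi, hpc j hj])
      (by rw [hpc i hi]; exact hF) hS
    rw [hpc i hi] at h
    unfold Ex
    have e : ∀ σ : U ≃ Fin N, (if bk σ (pos N l i) ∈ F then (1 : ℝ) else 0) *
      (if bk σ (pos N l j) ∈ F then (1 : ℝ) else 0) = if (bk σ (pos N l i) ∈ F ∧ bk σ (pos N l j) ∈ F) then 1 else 0 := by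
      intro σ; split_ifs <;> simp_all
    simp only [e]
    rw [hcardΩ, div_le_iff₀ hfpos, sum_boole]
    have h' : ((univ.filter (fun σ : U ≃ Fin N => bk σ (pos N l i) ∈ F ∧ bk σ (pos N l j) ∈ F)).card : ℝ) * (N.choose l) ^ 2 ≤ F.card ^ 2 * N.factorial := by
      exact_mod_cast h
    rw [← hα] at h'
    apply le_of_mul_le_mul_right _ (pow_pos hC 2)
    refine h'.trans (le_of_eq (by ring))
  have hmean : Ex (fun σ : U ≃ Fin N => (xx l t F σ : ℝ)) = α * t := by
    simp only [xx_eq]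
    rw [Ex_sum, sum_congr rfl hs]
    simp [mul_comm]
  refine ⟨hmean, ?_⟩
  have hsq : Ex (fun σ : U ≃ Fin N => (xx l t F σ : ℝ) ^ 2) ≤ t * α + t * (t - 1) * α ^ 2 := by
    simp only [xx_eq, sq, sum_mul_sum]
    rw [Ex_sum]
    simp only [Ex_sum]
    have : ∀ i ∈ range t, (∑ j ∈ range t, Ex (fun σ : U ≃ Fin N => (if bk σ (pos N l i) ∈ F then (1 : ℝ) else 0) *
      (if bk σ (pos N l j) ∈ F then (1 : ℝ) else 0))) ≤ α + (t - 1) * α ^ 2 := by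
      intro i hi
      rw [← add_sum_erase _ _ hi]
      apply add_le_add
      · rw [← hs i hi]
        apply le_of_eq
        congr 1
        ext σ
        split_ifs <;> simp
      · refine (sum_le_card_nsmul _ _ (α ^ 2) ?_).trans ?_
        · intro j hj
          rw [mem_erase] at hj
          exact hp i hi j hj.2 hj.1.symm
        · rw [card_erase_of_mem hi, card_range, nsmul_eq_mul, Nat.cast_sub]
          · simp
          · have := mem_range.1 hi; omega
    refine (sum_le_sum this).trans ?_
    rw [sum_const, card_range, nsmul_eq_mul]
    apply le_of_eq; ring
  have e : (fun σ : U ≃ Fin N => ((xx l t F σ : ℝ) - α * t) ^ 2) =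
      fun σ => (xx l t F σ : ℝ) ^ 2 + ((-2 * (α * t)) * (xx l t F σ : ℝ) + (α * t) ^ 2) := by
    ext σ; ring
  rw [e, Ex_add, Ex_add, Ex_mul, hmean, Ex_const]
  nlinarith

end

section
set_option linter.unusedVariables false

theorem hall_step {U : Finset ℕ} {N l t s : ℕ} (F : ℕ → Finset (Finset ℕ))
    (hR : ∀ g : Fin (s + 1) → Finset ℕ, (∀ i : Fin (s + 1), g i ∈ F (i : ℕ)) → (∀ i j, i ≠ j → Disjoint (g i) (g j)) → False)
    (σ : U ≃ Fin N) : ∃ j, j ≤ s ∧ xx l t (F j) σ + j ≤ s := by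
  classical
  by_contra hcon
  push Not at hcon
  let T : Fin (s + 1) → Finset ℕ := fun j => (range t).filter (fun i => bk σ (pos N l i) ∈ F j)
  have hT : ∀ J : Finset (Fin (s + 1)), J.card ≤ (J.biUnion T).card := by
    intro J
    rcases J.eq_empty_or_nonempty with rfl | hJ
    · simp
    have h1 := hcon (J.min' hJ) (by have := (J.min' hJ).2; omega)
    have h2 : J.card ≤ s + 1 - (J.min' hJ : ℕ) := by
      have : J ⊆ Ici (J.min' hJ) := fun x hx => mem_Ici.2 (min'_le _ _ hx)
      have := card_le_card this
      rwa [Fin.card_Ici] at this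
    have h3 : (T (J.min' hJ)).card ≤ (J.biUnion T).card :=
      card_le_card (subset_biUnion_of_mem T (min'_mem _ hJ))
    have h4 : (T (J.min' hJ)).card = xx l t (F (J.min' hJ)) σ := rfl
    omega
  obtain ⟨f, hf, hfT⟩ := (Finset.all_card_le_biUnion_card_iff_exists_injective T).1 hT
  refine hR (fun j : Fin (s + 1) => bk σ (pos N l (f j))) ?_ ?_
  · intro j
    exact (mem_filter.1 (hfT j)).2
  · intro i j hij
    exact bk_disj σ (pos_disj (fun h => hij (hf h)))

section regimes
variable {Ω : Type*} [Fintype Ω] [Nonempty Ω] {s t : ℕ} {x : ℕ → Ω → ℕ} {α : ℕ → ℝ}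

theorem regime_one (hs : 10000 ≤ s) (ht1 : 1.666 * (s : ℝ) ≤ t) (ht2 : (t : ℝ) ≤ 2 * s)
    (hanti : ∀ i j σ, i ≤ j → j ≤ s → x j σ ≤ x i σ) (hxt : ∀ j σ, x j σ ≤ t)
    (hall : ∀ σ, ∃ j, j ≤ s ∧ x j σ + j ≤ s)
    (hα0 : ∀ j, 0 ≤ α j) (hα1 : ∀ j, α j ≤ 1) (hαanti : ∀ i j, i ≤ j → j ≤ s → α j ≤ α i)
    (hmean : ∀ j, j ≤ s → Ex (fun σ => (x j σ : ℝ)) = α j * t)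
    (hvar : ∀ j, j ≤ s → Ex (fun σ => ((x j σ : ℝ) - α j * t) ^ 2) ≤ t * (α j * (1 - α j)))
    (hI : 1.1 * (s : ℝ) ≤ α (s / 2) * t) :
    (s + 1) * α s ≤ ∑ i ∈ range s, (1 - α i) := by
  have hs' : (10000 : ℝ) ≤ s := by exact_mod_cast hs
  set D := ∑ i ∈ range s, (1 - α i) with hD
  set m := s / 2 with hm
  have hms : m ≤ s := by omega
  have pt : ∀ σ, ((s : ℝ) + 1) * (x s σ : ℝ) ≤ (0.9 * ∑ i ∈ range s, ((t : ℝ) + (-1) * x i σ)) +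
      ((s + 1) * t / (0.1 * s) ^ 2) * ((x m σ : ℝ) - α m * t) ^ 2 := by
    intro σ
    obtain ⟨j, hj, hju⟩ := hall σ
    have hxs : x s σ ≤ x j σ := hanti j s σ hj le_rfl
    have hterm : ∀ i, (0 : ℝ) ≤ (t : ℝ) + (-1) * x i σ := by
      intro i
      have : (x i σ : ℝ) ≤ t := by exact_mod_cast hxt i σ
      linarith
    by_cases hc : j ≤ m
    · have hxm : x m σ ≤ s := by
        have := hanti j m σ hc hms
        omega
      have hxm' : (x m σ : ℝ) ≤ s := by exact_mod_cast hxm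
      have h1 : (0.1 * (s : ℝ)) ^ 2 ≤ ((x m σ : ℝ) - α m * t) ^ 2 := by
        rw [← neg_sq ((x m σ : ℝ) - α m * t)]
        apply pow_le_pow_left₀ (by positivity)
        linarith
      have h2 : ((s : ℝ) + 1) * (x s σ : ℝ) ≤ ((s + 1) * t / (0.1 * s) ^ 2) * ((x m σ : ℝ) - α m * t) ^ 2 := by
        calc ((s : ℝ) + 1) * (x s σ : ℝ) ≤ (s + 1) * t := by
              gcongr; exact_mod_cast hxt s σ
          _ = ((s + 1) * t / (0.1 * s) ^ 2) * (0.1 * s) ^ 2 := by field_simp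
          _ ≤ _ := by gcongr
      have h3 : (0 : ℝ) ≤ ∑ i ∈ range s, ((t : ℝ) + (-1) * x i σ) := sum_nonneg (fun i _ => hterm i)
      linarith
    · have h2 : (0 : ℝ) ≤ ((s + 1) * t / (0.1 * s) ^ 2) * ((x m σ : ℝ) - α m * t) ^ 2 := by positivity
      have hsub : Ico j s ⊆ range s := by intro i hi; rw [mem_Ico] at hi; exact mem_range.2 hi.2
      have h3 : ∑ i ∈ Ico j s, ((t : ℝ) + (-1) * x i σ) ≤ ∑ i ∈ range s, ((t : ℝ) + (-1) * x i σ) :=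
        sum_le_sum_of_subset_of_nonneg hsub (fun i _ _ => hterm i)
      have h4 : (Ico j s).card • ((t : ℝ) - x j σ) ≤ ∑ i ∈ Ico j s, ((t : ℝ) + (-1) * x i σ) := by
        apply card_nsmul_le_sum
        intro i hi
        rw [mem_Ico] at hi
        have : (x i σ : ℝ) ≤ x j σ := by exact_mod_cast hanti j i σ hi.1 hi.2.le
        linarith
      obtain ⟨u, hu⟩ : ∃ u, s = j + u := ⟨s - j, by omega⟩
      have h5 : (x j σ : ℝ) ≤ u := by exact_mod_cast (by omega : x j σ ≤ u)
      have h6 : (x s σ : ℝ) ≤ u := by exact_mod_cast (by omega : x s σ ≤ u)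
      have h7 : (Ico j s).card = u := by simp; omega
      rw [h7, nsmul_eq_mul] at h4
      have h8 : 2 * (u : ℝ) ≤ s := by exact_mod_cast (by omega : 2 * u ≤ s)
      have h9 : (u : ℝ) * (s + 1) ≤ u * (0.9 * (t - u)) := by
        apply mul_le_mul_of_nonneg_left _ (by positivity)
        linarith
      have h10 : (u : ℝ) * (t - u) ≤ u * (t - x j σ) := by gcongr
      nlinarith
  have hE := Ex_mono pt
  rw [Ex_add, Ex_mul, Ex_mul, Ex_mul, Ex_sum] at hE
  have e1 : ∑ i ∈ range s, Ex (fun σ : Ω => (t : ℝ) + (-1) * x i σ) = t * D := by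
    rw [hD, mul_sum]
    apply sum_congr rfl
    intro i hi
    rw [Ex_add, Ex_const, Ex_mul, hmean i (mem_range.1 hi).le]
    ring
  rw [e1, hmean s le_rfl] at hE
  have hDm : (1 - α m) * s ≤ 2 * D := by
    have hsub : Ico m s ⊆ range s := by intro i hi; rw [mem_Ico] at hi; exact mem_range.2 hi.2
    have h3 : ∑ i ∈ Ico m s, (1 - α i) ≤ D :=
      sum_le_sum_of_subset_of_nonneg hsub (fun i _ _ => by linarith [hα1 i])
    have h4 : (Ico m s).card • (1 - α m) ≤ ∑ i ∈ Ico m s, (1 - α i) := by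
      apply card_nsmul_le_sum
      intro i hi
      rw [mem_Ico] at hi
      have := hαanti m i hi.1 hi.2.le
      linarith
    rw [Nat.card_Ico, nsmul_eq_mul] at h4
    have h5 : (s : ℝ) ≤ 2 * ((s - m : ℕ) : ℝ) := by exact_mod_cast (by omega : s ≤ 2 * (s - m))
    have := hα1 m
    nlinarith
  have htp : (0 : ℝ) < t := by linarith
  have h1 : Ex (fun σ => ((x m σ : ℝ) - α m * t) ^ 2) ≤ t * (1 - α m) := by
    refine (hvar m hms).trans ?_
    have := hα1 m
    have := hα0 m
    apply mul_le_mul_of_nonneg_left _ htp.le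
    nlinarith
  have hDpos : 0 ≤ D := sum_nonneg (fun i _ => by linarith [hα1 i])
  have h2 : ((s + 1) * t / (0.1 * s) ^ 2) * Ex (fun σ => ((x m σ : ℝ) - α m * t) ^ 2) ≤ 0.1 * (t * D) := by
    calc _ ≤ ((s + 1) * t / (0.1 * s) ^ 2) * (t * (1 - α m)) := by gcongr
      _ = (((s + 1) * t / (0.1 * s) ^ 2) / s) * (t * ((1 - α m) * s)) := by field_simp
      _ ≤ (((s + 1) * t / (0.1 * s) ^ 2) / s) * (t * (2 * D)) := by gcongr
      _ = (200 * (s + 1) * t / s ^ 3) * (t * D) := by field_simp; ring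
      _ ≤ _ := by
        apply mul_le_mul_of_nonneg_right _ (by positivity)
        rw [div_le_iff₀ (by positivity)]
        have q1 : 200 * ((s : ℝ) + 1) * t ≤ 200 * (s + 1) * (2 * s) := by gcongr
        have q2 : 0 ≤ (s : ℝ) * ((s - 10000) * s) := by
          have : (0:ℝ) ≤ s - 10000 := by linarith
          positivity
        nlinarith
  have h3 : t * ((s + 1) * α s) ≤ t * D := by nlinarith
  exact le_of_mul_le_mul_left h3 htp

theorem regime_two_claim (hs : 10 ^ 16 ≤ s) (ht2 : (t : ℝ) ≤ 2 * s) (ht0 : 0 < t)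
    (hanti : ∀ i j σ, i ≤ j → j ≤ s → x j σ ≤ x i σ)
    (hall : ∀ σ, ∃ j, j ≤ s ∧ x j σ + j ≤ s)
    (hα0 : ∀ j, 0 ≤ α j) (hα1 : ∀ j, α j ≤ 1)
    (hvar : ∀ j, j ≤ s → Ex (fun σ => ((x j σ : ℝ) - α j * t) ^ 2) ≤ t * (α j * (1 - α j))) :
    ∃ j, j ≤ s ∧ α j * t ≤ s - j + s / 20000 := by
  by_contra hcon
  push Not at hcon
  have hs' : (10 ^ 16 : ℝ) ≤ s := by exact_mod_cast hs
  set h := s / 80000 + 1 with hh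
  have hKh : s ≤ 80000 * h := by omega
  have hh2 : (h : ℝ) ≤ s / 40000 := by
    rw [le_div_iff₀ (by norm_num)]
    exact_mod_cast (by omega : h * 40000 ≤ s)
  have pt : ∀ σ, (((s : ℝ) / 40000) ^ 2) ≤ ∑ i ∈ range 80001, ((x (min s (i * h)) σ : ℝ) - α (min s (i * h)) * t) ^ 2 := by
    intro σ
    obtain ⟨j0, hj0, hx0⟩ := hall σ
    have hhp : 0 < h := by omega
    set i := (j0 + h - 1) / h with hi
    have hi1 : j0 ≤ i * h := by
      have h1 := Nat.div_add_mod (j0 + h - 1) h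
      have h2 := Nat.mod_lt (j0 + h - 1) hhp
      rw [← hi, mul_comm] at h1
      omega
    have hi2 : i * h ≤ j0 + h := by
      have h1 := Nat.div_mul_le_self (j0 + h - 1) h
      rw [← hi] at h1
      omega
    have hi3 : i < 80001 := by
      by_contra hge
      push Not at hge
      have : 80001 * h ≤ i * h := Nat.mul_le_mul_right _ hge
      have : i * h ≤ j0 + h - 1 := Nat.div_mul_le_self (j0 + h - 1) h
      omega
    refine le_trans ?_ (single_le_sum (f := fun i => ((x (min s (i * h)) σ : ℝ) - α (min s (i * h)) * t) ^ 2) (fun i _ => sq_nonneg _) (mem_range.2 hi3))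
    set j := min s (i * h) with hj
    have hjs : j ≤ s := min_le_left _ _
    have hj0j : j0 ≤ j := le_min hj0 hi1
    have hx1 : x j σ ≤ x j0 σ := hanti j0 j σ hj0j hjs
    have hx2 : x j σ + j ≤ s + h := by
      have : j ≤ i * h := min_le_right _ _
      omega
    have hx3 : (x j σ : ℝ) + j ≤ s + h := by exact_mod_cast hx2
    have := hcon j hjs
    rw [← neg_sq ((x j σ : ℝ) - α j * t)]
    apply pow_le_pow_left₀ (by positivity)
    linarith
  have hE := Ex_mono pt
  rw [Ex_const, Ex_sum] at hE
  have h2 : ∑ i ∈ range 80001, Ex (fun σ => ((x (min s (i * h)) σ : ℝ) - α (min s (i * h)) * t) ^ 2) ≤ 80001 * (2 * s) := by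
    refine (sum_le_card_nsmul _ _ (2 * (s : ℝ)) ?_).trans (by simp)
    intro i _
    refine (hvar _ (min_le_left _ _)).trans ?_
    have := hα0 (min s (i * h))
    have := hα1 (min s (i * h))
    have : α (min s (i * h)) * (1 - α (min s (i * h))) ≤ 1 := by nlinarith
    have ht0' : (0 : ℝ) < t := by exact_mod_cast ht0
    nlinarith
  have h3 := hE.trans h2
  nlinarith

theorem regimes (hs : 10 ^ 16 ≤ s) (ht1 : 1.666 * (s : ℝ) ≤ t) (ht2 : (t : ℝ) ≤ 1.666 * s + 1)
    (hanti : ∀ i j σ, i ≤ j → j ≤ s → x j σ ≤ x i σ) (hxt : ∀ j σ, x j σ ≤ t)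
    (hall : ∀ σ, ∃ j, j ≤ s ∧ x j σ + j ≤ s)
    (hα0 : ∀ j, 0 ≤ α j) (hα1 : ∀ j, α j ≤ 1) (hαanti : ∀ i j, i ≤ j → j ≤ s → α j ≤ α i)
    (hmean : ∀ j, j ≤ s → Ex (fun σ => (x j σ : ℝ)) = α j * t)
    (hvar : ∀ j, j ≤ s → Ex (fun σ => ((x j σ : ℝ) - α j * t) ^ 2) ≤ t * (α j * (1 - α j))) :
    (s + 1) * α s ≤ ∑ i ∈ range s, (1 - α i) ∨ 0.3985 * s + 1 ≤ ∑ i ∈ range s, (1 - α i) := by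
  have hs' : (10 ^ 16 : ℝ) ≤ s := by exact_mod_cast hs
  by_cases hI : 1.1 * (s : ℝ) ≤ α (s / 2) * t
  · left
    exact regime_one (by omega) ht1 (by linarith) hanti hxt hall hα0 hα1 hαanti hmean hvar hI
  push Not at hI
  have htp : (0 : ℝ) < t := by linarith
  have ht0 : 0 < t := by exact_mod_cast htp
  obtain ⟨j, hj, hju⟩ := regime_two_claim hs (by linarith) ht0 hanti hall hα0 hα1 hvar
  set D := ∑ i ∈ range s, (1 - α i) with hD
  have gen : ∀ m, m ≤ s → ((s : ℝ) - m) * (1 - α m) ≤ D := by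
    intro m hm
    have hsub : Ico m s ⊆ range s := by intro i hi; rw [mem_Ico] at hi; exact mem_range.2 hi.2
    have h3 : ∑ i ∈ Ico m s, (1 - α i) ≤ D :=
      sum_le_sum_of_subset_of_nonneg hsub (fun i _ _ => by linarith [hα1 i])
    have h4 : (Ico m s).card • (1 - α m) ≤ ∑ i ∈ Ico m s, (1 - α i) := by
      apply card_nsmul_le_sum
      intro i hi
      rw [mem_Ico] at hi
      have := hαanti m i hi.1 hi.2.le
      linarith
    rw [Nat.card_Ico, nsmul_eq_mul, Nat.cast_sub hm] at h4
    linarith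
  have hαs : α s * t ≤ s - j + s / 20000 := by
    refine le_trans ?_ hju
    exact mul_le_mul_of_nonneg_right (hαanti j s hj le_rfl) htp.le
  have hj' : (j : ℝ) ≤ s := by exact_mod_cast hj
  set u : ℝ := (s : ℝ) - j with hu
  have hu0 : 0 ≤ u := by linarith
  have hus : u ≤ s := by have : (0:ℝ) ≤ j := by positivity
                         linarith
  have hg := gen j hj
  rw [← hu] at hg
  -- multiply by t
  have hgt : u * (t - (u + s / 20000)) ≤ D * t := by
    calc u * (t - (u + s / 20000)) ≤ u * (t - α j * t) := by gcongr
      _ = (u * (1 - α j)) * t := by ring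
      _ ≤ _ := by gcongr
  by_cases hA : u ≤ 0.1 * s
  · left
    have hm := gen (s / 2) (by omega)
    have h5 : ((s / 2 : ℕ) : ℝ) ≤ s / 2 := Nat.cast_div_le
    have h6 : α (s / 2) ≤ 0.67 := by
      by_contra h
      push Not at h
      nlinarith
    have h7 : 0.165 * (s : ℝ) ≤ D := by nlinarith
    have h8 : α s ≤ 0.07 := by
      by_contra h
      push Not at h
      nlinarith
    nlinarith
  push Not at hA
  by_cases hB : u ≤ 0.663 * s
  · left
    have : ((s + 1) * α s) * t ≤ D * t := by
      have h1 : ((s + 1) * α s) * t ≤ (s + 1) * (u + s / 20000) := by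
        rw [mul_assoc]; gcongr
      have h2 : ((s : ℝ) + 1) * (u + s / 20000) ≤ u * (t - (u + s / 20000)) := by
        have h3 : u * (1.666 * s - (u + s / 20000)) ≤ u * (t - (u + s / 20000)) := by gcongr
        refine le_trans ?_ h3
        have h4 := mul_nonneg (sub_nonneg.2 hA.le) (sub_nonneg.2 hB)
        nlinarith
      linarith
    exact le_of_mul_le_mul_right this htp
  · right
    push Not at hB
    have : (0.3985 * s + 1) * t ≤ D * t := by
      refine le_trans ?_ hgt
      have h4 := mul_nonneg (sub_nonneg.2 hus) (sub_nonneg.2 hB.le)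
      have h5 : (0:ℝ) ≤ u - 0.3985 * s - 1 := by linarith
      have h6 : (u - 0.3985 * s - 1) * (1.666 * s) ≤ (u - 0.3985 * s - 1) * t := by gcongr
      nlinarith
    exact le_of_mul_le_mul_right this htp
end regimes

end

section
set_option linter.unusedVariables false

theorem card_fiber {n m a : ℕ} {S : Finset ℕ} (hS : S ⊆ range m) {F : Finset (Finset ℕ)}
    (hF : F ⊆ (range n).powersetCard (S.card + a)) :
    (F.filter (fun A => A.filter (· < m) = S)).card = (Lk F S (Ico m n) a).card := by
  classical
  symm
  have hfil : ∀ G : Finset ℕ, G ⊆ Ico m n → (S ∪ G).filter (· < m) = S := by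
    intro G hG
    ext x
    simp only [mem_filter, mem_union]
    constructor
    · rintro ⟨h | h, hx⟩
      · exact h
      · have := mem_Ico.1 (hG h); omega
    · intro h
      exact ⟨Or.inl h, mem_range.1 (hS h)⟩
  refine card_bij (fun G _ => S ∪ G) ?_ ?_ ?_
  · intro G hG
    rw [mem_Lk] at hG
    rw [mem_filter]
    exact ⟨hG.2.2, hfil G hG.1⟩
  · intro G hG G' hG' h
    rw [mem_Lk] at hG hG'
    have key : ∀ H : Finset ℕ, H ⊆ Ico m n → (S ∪ H) \ S = H := by
      intro H hH
      rw [union_sdiff_left, Finset.sdiff_eq_self_iff_disjoint, disjoint_left]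
      intro x hx hxS
      have := mem_Ico.1 (hH hx)
      have := mem_range.1 (hS hxS)
      omega
    rw [← key G hG.1, h, key G' hG'.1]
  · intro A hA
    rw [mem_filter] at hA
    have hA' := mem_powersetCard.1 (hF hA.1)
    have hSA : S ⊆ A := by rw [← hA.2]; exact filter_subset _ _
    refine ⟨A \ S, ?_, union_sdiff_of_subset hSA⟩
    rw [mem_Lk, union_sdiff_of_subset hSA, card_sdiff_of_subset hSA]
    refine ⟨?_, by omega, hA.1⟩
    intro x hx
    rw [mem_sdiff] at hx
    have h1 := mem_range.1 (hA'.1 hx.1)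
    rw [mem_Ico]
    refine ⟨?_, h1⟩
    by_contra h
    push Not at h
    apply hx.2
    rw [← hA.2, mem_filter]
    exact ⟨hx.1, h⟩

theorem decomp {n m l : ℕ} {F : Finset (Finset ℕ)} (hF : F ⊆ (range n).powersetCard (l + 1)) :
    F.card = (F.filter (fun A => 2 ≤ (A.filter (· < m)).card)).card +
      ∑ i ∈ range m, (Lk F {i} (Ico m n) l).card + (Lk F ∅ (Ico m n) (l + 1)).card := by
  classical
  rw [← card_fiber (S := ∅) (a := l + 1) (by simp) (by simpa using hF)]
  have h1 : ∀ i ∈ range m, (Lk F {i} (Ico m n) l).card = (F.filter (fun A => A.filter (· < m) = {i})).card := by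
    intro i hi
    rw [← card_fiber (S := {i}) (a := l) (by simpa using hi) (by simpa [add_comm] using hF)]
  rw [sum_congr rfl h1]
  have h2 : ∑ i ∈ range m, (F.filter (fun A => A.filter (· < m) = {i})).card =
      (F.filter (fun A => (A.filter (· < m)).card = 1)).card := by
    rw [← card_biUnion]
    · congr 1
      ext A
      simp only [mem_biUnion, mem_filter, mem_range]
      constructor
      · rintro ⟨i, hi, hA, h⟩
        exact ⟨hA, by rw [h]; simp⟩
      · rintro ⟨hA, h⟩
        obtain ⟨i, hi⟩ := card_eq_one.1 h
        refine ⟨i, ?_, hA, hi⟩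
        have : i ∈ A.filter (· < m) := by rw [hi]; simp
        exact (mem_filter.1 this).2
    · intro i _ j _ hij
      simp only [Function.onFun]; rw [disjoint_left]
      intro A hA hA'
      rw [mem_filter] at hA hA'
      exact hij (singleton_injective (hA.2.symm.trans hA'.2))
  rw [h2]
  have e1 := card_filter_add_card_filter_not (s := F) (fun A => 2 ≤ (A.filter (· < m)).card)
  have e2 := card_filter_add_card_filter_not (s := F.filter (fun A => ¬ 2 ≤ (A.filter (· < m)).card)) (fun A => (A.filter (· < m)).card = 1)
  have e3 : (F.filter (fun A => ¬ 2 ≤ (A.filter (· < m)).card)).filter (fun A => (A.filter (· < m)).card = 1) =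
    F.filter (fun A => (A.filter (· < m)).card = 1) := by
    rw [filter_filter]; apply filter_congr; intro A _; omega
  have e4 : (F.filter (fun A => ¬ 2 ≤ (A.filter (· < m)).card)).filter (fun A => ¬ (A.filter (· < m)).card = 1) =
    F.filter (fun A => A.filter (· < m) = ∅) := by
    rw [filter_filter]; apply filter_congr; intro A _; rw [← card_eq_zero]; omega
  rw [e3, e4] at e2
  omega

theorem step_one {N s l : ℕ} {F : Finset (Finset ℕ)} (hF : F ⊆ (range (N + s + 1)).powersetCard (l + 1)) :
    F.card + s * N.choose l + (N + 1).choose (l + 1) ≤ (N + s + 1).choose (l + 1) +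
      ∑ i ∈ range (s + 1), (Lk F {i} (Ico (s + 1) (N + s + 1)) l).card + (Lk F ∅ (Ico (s + 1) (N + s + 1)) (l + 1)).card := by
  classical
  have h1 := decomp (m := s + 1) hF
  have h2 := decomp (n := N + s + 1) (m := s + 1) (l := l) (F := (range (N + s + 1)).powersetCard (l + 1)) subset_rfl
  have hc : (Ico (s + 1) (N + s + 1)).card = N := by simp
  have h3 : ∀ i ∈ range (s + 1), (Lk ((range (N + s + 1)).powersetCard (l + 1)) {i} (Ico (s + 1) (N + s + 1)) l).card = N.choose l := by
    intro i hi
    rw [mem_range] at hi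
    have : Lk ((range (N + s + 1)).powersetCard (l + 1)) {i} (Ico (s + 1) (N + s + 1)) l = (Ico (s + 1) (N + s + 1)).powersetCard l := by
      apply Subset.antisymm (Lk_sub _ _ _ _)
      intro G hG
      rw [mem_powersetCard] at hG
      rw [mem_Lk, ← insert_eq, mem_powersetCard]
      have hiG : i ∉ G := fun h => by have := mem_Ico.1 (hG.1 h); omega
      refine ⟨hG.1, hG.2, ?_, by rw [card_insert_of_notMem hiG, hG.2]⟩
      intro x hx
      rw [mem_insert] at hx
      rw [mem_range]
      rcases hx with rfl | hx
      · omega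
      · exact (mem_Ico.1 (hG.1 hx)).2
    rw [this, card_powersetCard, hc]
  have h4 : (Lk ((range (N + s + 1)).powersetCard (l + 1)) ∅ (Ico (s + 1) (N + s + 1)) (l + 1)).card = N.choose (l + 1) := by
    have : Lk ((range (N + s + 1)).powersetCard (l + 1)) ∅ (Ico (s + 1) (N + s + 1)) (l + 1) = (Ico (s + 1) (N + s + 1)).powersetCard (l + 1) := by
      apply Subset.antisymm (Lk_sub _ _ _ _)
      intro G hG
      rw [mem_powersetCard] at hG
      rw [mem_Lk, empty_union, mem_powersetCard]
      refine ⟨hG.1, hG.2, ?_, hG.2⟩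
      intro x hx
      exact mem_range.2 (mem_Ico.1 (hG.1 hx)).2
    rw [this, card_powersetCard, hc]
  rw [sum_congr rfl h3, h4] at h2
  simp only [card_powersetCard, card_range, sum_const, smul_eq_mul] at h2
  have h5 : (F.filter (fun A => 2 ≤ (A.filter (· < s + 1)).card)).card ≤
    (((range (N + s + 1)).powersetCard (l + 1)).filter (fun A => 2 ≤ (A.filter (· < s + 1)).card)).card :=
    card_le_card (filter_subset_filter _ hF)
  have h6 : (N + 1).choose (l + 1) = N.choose l + N.choose (l + 1) := Nat.choose_succ_succ' _ _
  have h7 : (s + 1) * N.choose l = s * N.choose l + N.choose l := by ring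
  omega

section
variable {N s l : ℕ} {F : Finset (Finset ℕ)}

/-- abbreviations -/
def UU (N s : ℕ) : Finset ℕ := Ico (s + 1) (N + s + 1)
def FF (F : Finset (Finset ℕ)) (N s l i : ℕ) : Finset (Finset ℕ) := Lk F {i} (UU N s) l
def BB (F : Finset (Finset ℕ)) (N s l : ℕ) : Finset (Finset ℕ) := Lk F ∅ (UU N s) (l + 1)

theorem UU_card : (UU N s).card = N := by simp [UU]

theorem mem_UU {x : ℕ} : x ∈ UU N s ↔ s + 1 ≤ x ∧ x < N + s + 1 := by simp [UU]

theorem UU_sub : UU N s ⊆ range (N + s + 1) := by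
  intro x hx; rw [mem_UU] at hx; exact mem_range.2 hx.2

theorem disj_UU {i : ℕ} (hi : i ≤ s) : Disjoint {i} (UU N s) := by
  rw [disjoint_singleton_left, mem_UU]; omega

theorem FF_sub (i : ℕ) : FF F N s l i ⊆ (UU N s).powersetCard l := Lk_sub _ _ _ _

theorem FF_sh (hS : ShOn (range (N + s + 1)) F) {i : ℕ} (hi : i ≤ s) : ShOn (UU N s) (FF F N s l i) :=
  (hS.mono UU_sub).link (disj_UU hi) l

theorem FF_anti (hS : ShOn (range (N + s + 1)) F) {i j : ℕ} (hij : i ≤ j) (hj : j ≤ s) :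
    FF F N s l j ⊆ FF F N s l i := by
  intro G hG
  rcases hij.eq_or_lt with rfl | hlt
  · exact hG
  unfold FF at *
  rw [mem_Lk, ← insert_eq] at *
  refine ⟨hG.1, hG.2.1, ?_⟩
  have hjG : j ∉ G := fun h => by have := mem_UU.1 (hG.1 h); omega
  have hiG : i ∉ G := fun h => by have := mem_UU.1 (hG.1 h); omega
  have := hS _ hG.2.2 j (mem_insert_self _ _) i (mem_range.2 (by omega)) hlt (by
    rw [mem_insert]; push Not; exact ⟨by omega, hiG⟩)
  rwa [erase_insert hjG] at this

theorem rainbow (hs : NoM F s) (g : Fin (s + 1) → Finset ℕ) (hg : ∀ i : Fin (s + 1), g i ∈ FF F N s l (i : ℕ))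
    (hd : ∀ i j, i ≠ j → Disjoint (g i) (g j)) : False := by
  have hg' : ∀ i : Fin (s + 1), g i ⊆ UU N s ∧ insert (i : ℕ) (g i) ∈ F := by
    intro i
    have := hg i
    unfold FF at this
    rw [mem_Lk, ← insert_eq] at this
    exact ⟨this.1, this.2.2⟩
  have hni : ∀ i j : Fin (s + 1), (i : ℕ) ∉ g j := by
    intro i j h
    have := mem_UU.1 ((hg' j).1 h)
    have := i.2
    omega
  refine hs.indexed (ι := Fin (s + 1)) (by simp) (fun i => insert (i : ℕ) (g i)) (fun i => (hg' i).2)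
    (fun i => insert_nonempty _ _) ?_
  intro i j hij
  rw [disjoint_insert_left, disjoint_insert_right, mem_insert]
  push Not
  exact ⟨⟨fun h => hij (Fin.ext h), hni i j⟩, hni j i, hd i j hij⟩

theorem NoM_E (hS : ShOn (range (N + s + 1)) F) (hs : NoM F s) : NoM (FF F N s l s) s := by
  classical
  intro M hM hd
  by_contra hlt
  push Not at hlt
  obtain ⟨M', hM'M, hM'⟩ := exists_subset_card_eq (show s + 1 ≤ M.card by omega)
  have e : Fin (s + 1) ≃ M' := (Fintype.equivOfCardEq (by simp [hM'])).symm
  refine rainbow (N := N) (l := l) hs (fun i => (e i : Finset ℕ)) ?_ ?_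
  · intro i
    exact FF_anti hS (by have := i.2; omega) le_rfl (hM (hM'M (e i).2))
  · intro i j hij
    exact hd (hM'M (e i).2) (hM'M (e j).2) (fun h => hij (e.injective (Subtype.ext h)))

theorem BB_sub : BB F N s l ⊆ F := by
  intro A hA
  unfold BB at hA
  rw [mem_Lk, empty_union] at hA
  exact hA.2.2

theorem BB_shad (hS : ShOn (range (N + s + 1)) F) : ShadIn (BB F N s l) (FF F N s l s) := by
  intro A hA x hx
  unfold BB at hA
  unfold FF
  rw [mem_Lk, empty_union] at hA
  rw [mem_Lk, ← insert_eq]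
  refine ⟨(erase_subset _ _).trans hA.1, by rw [card_erase_of_mem hx]; omega, ?_⟩
  have h1 := mem_UU.1 (hA.1 hx)
  exact hS A hA.2.2 x hx s (mem_range.2 (by omega)) (by omega) (fun h => by
    have := mem_UU.1 (hA.1 h); omega)

theorem BB_le (hS : ShOn (range (N + s + 1)) F) (hs : NoM F s) :
    (BB F N s l).card ≤ s * (FF F N s l s).card :=
  shadow_bound s (UU N s) l _ _ (Lk_sub _ _ _ _) (FF_sub s) (BB_shad hS)
    ((hS.mono UU_sub).link (disjoint_empty_left _) _) (hs.mono BB_sub)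

/-- members of E that start late -/
def TT (F : Finset (Finset ℕ)) (N s l y : ℕ) : Finset (Finset ℕ) :=
  (FF F N s l s).filter (fun G => ∀ g ∈ G, s + 1 + y ≤ g)

theorem TT_zero : TT F N s l 0 = FF F N s l s := by
  unfold TT
  rw [filter_true_of_mem]
  intro G hG g hg
  have := (mem_powersetCard.1 (FF_sub s hG)).1 hg
  rw [mem_UU] at this
  omega

theorem TT_anti (y : ℕ) : TT F N s l (y + 1) ⊆ TT F N s l y := by
  intro G hG
  unfold TT at *
  rw [mem_filter] at *
  exact ⟨hG.1, fun g hg => by have := hG.2 g hg; omega⟩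

theorem TT_s (hF : F ⊆ (range (N + s + 1)).powersetCard (l + 1)) (hS : ShOn (range (N + s + 1)) F) (hs : NoM F s) :
    (TT F N s l s).card + (wset s (s + 1) N l).card ≤ (N - s).choose l := by
  classical
  have hc : (Ico (2 * s + 1) (N + s + 1)).card = N - s := by simp; omega
  rw [← hc, ← card_powersetCard, ← card_union_of_disjoint]
  · apply card_le_card
    apply union_subset
    · intro G hG
      unfold TT at hG
      rw [mem_filter] at hG
      have h1 := mem_powersetCard.1 (FF_sub s hG.1)
      rw [mem_powersetCard]
      refine ⟨fun x hx => ?_, h1.2⟩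
      have h2 := hG.2 x hx
      have h3 := mem_UU.1 (h1.1 hx)
      rw [mem_Ico]; omega
    · intro G hG
      rw [mem_wset] at hG
      rw [mem_powersetCard]
      refine ⟨fun x hx => ?_, hG.2.1⟩
      have h1 := mem_Ico.1 (hG.1 hx)
      have h2 := hG.2.2 s
      rw [mem_Ico]
      refine ⟨?_, by omega⟩
      by_contra h
      push Not at h
      have : 0 < (G.filter (· < s + 1 + s)).card := card_pos.2 ⟨x, mem_filter.2 ⟨hx, by omega⟩⟩
      nlinarith
  · rw [disjoint_left]
    intro G hG hG'
    unfold TT FF at hG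
    rw [mem_filter, mem_Lk, ← insert_eq] at hG
    rw [mem_wset] at hG'
    refine no_walk hF (by omega) hS hs _ hG.1.2.2 ?_
    intro m
    by_cases hm : m ≤ s
    · rw [filter_false_of_mem]
      · simp
      · intro x hx
        rw [mem_insert] at hx
        rcases hx with rfl | hx
        · omega
        · have := mem_UU.1 (hG.1.1 hx); omega
    · have h1 := hG'.2.2 (m - (s + 1))
      have e : s + 1 + (m - (s + 1)) = 0 + m := by omega
      rw [e] at h1
      rw [filter_insert, if_pos (by omega)]
      have := card_insert_le s (G.filter (· < 0 + m))
      calc _ ≤ (s + 1) * ((G.filter (· < 0 + m)).card + 1) := Nat.mul_le_mul_left _ this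
        _ = (s + 1) * (G.filter (· < 0 + m)).card + (s + 1) := by ring
        _ ≤ m := by omega

def B2 (F : Finset (Finset ℕ)) (N s l : ℕ) : Finset (Finset ℕ) :=
  (BB F N s l).filter (fun G => ∀ g ∈ G, 2 * s + 1 ≤ g)

theorem B2_le (hF : F ⊆ (range (N + s + 1)).powersetCard (l + 1)) (hS : ShOn (range (N + s + 1)) F) (hs : NoM F s) :
    (B2 F N s l).card + (wset s 0 (N + s + 1) (l + 1)).card ≤ (N - s).choose (l + 1) + (s + 1) * (wset s (s + 1) N l).card := by
  classical
  have hc : (Ico (2 * s + 1) (N + s + 1)).card = N - s := by simp; omega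
  set W := wset s 0 (N + s + 1) (l + 1) with hW
  have h1 : (B2 F N s l).card + (W.filter (fun K => ∀ g ∈ K, 2 * s + 1 ≤ g)).card ≤ (N - s).choose (l + 1) := by
    rw [← hc, ← card_powersetCard, ← card_union_of_disjoint]
    · apply card_le_card
      apply union_subset
      · intro G hG
        unfold B2 BB at hG
        rw [mem_filter] at hG
        have h1 := mem_powersetCard.1 (Lk_sub _ _ _ _ hG.1)
        rw [mem_powersetCard]
        refine ⟨fun x hx => ?_, h1.2⟩
        have h2 := hG.2 x hx
        have h3 := mem_UU.1 (h1.1 hx)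
        rw [mem_Ico]; omega
      · intro G hG
        rw [mem_filter, hW, mem_wset] at hG
        rw [mem_powersetCard]
        refine ⟨fun x hx => ?_, hG.1.2.1⟩
        have h1 := mem_Ico.1 (hG.1.1 hx)
        have h2 := hG.2 x hx
        rw [mem_Ico]; omega
    · rw [disjoint_left]
      intro G hG hG'
      unfold B2 at hG
      rw [mem_filter] at hG
      rw [mem_filter, hW, mem_wset] at hG'
      exact no_walk hF (by omega) hS hs _ (BB_sub hG.1) hG'.1.2.2
  have h2 : (W.filter (fun K => ¬ ∀ g ∈ K, 2 * s + 1 ≤ g)).card ≤ (s + 1) * (wset s (s + 1) N l).card := by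
    have hsub : W.filter (fun K => ¬ ∀ g ∈ K, 2 * s + 1 ≤ g) ⊆
        ((Icc s (2 * s)) ×ˢ (wset s (s + 1) N l)).image (fun p => insert p.1 p.2) := by
      intro K hK
      rw [mem_filter, hW, mem_wset] at hK
      obtain ⟨⟨hK1, hK2, hK3⟩, hK4⟩ := hK
      push Not at hK4
      obtain ⟨i, hi, hi2⟩ := hK4
      have his : s ≤ i := by
        by_contra h
        have h1 := hK3 s
        have : 0 < (K.filter (· < 0 + s)).card := card_pos.2 ⟨i, mem_filter.2 ⟨hi, by omega⟩⟩
        nlinarith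
      have hone : ∀ x ∈ K, x ≠ i → 2 * s + 1 ≤ x := by
        intro x hx hxi
        by_contra h
        have h1 := hK3 (2 * s + 1)
        have : ({x, i} : Finset ℕ) ⊆ K.filter (· < 0 + (2 * s + 1)) := by
          intro y hy
          rw [mem_insert, mem_singleton] at hy
          rw [mem_filter]
          rcases hy with rfl | rfl
          · exact ⟨hx, by omega⟩
          · exact ⟨hi, by omega⟩
        have h2 := card_le_card this
        rw [card_pair hxi] at h2
        nlinarith
      rw [mem_image]
      refine ⟨(i, K.erase i), ?_, insert_erase hi⟩
      rw [mem_product, mem_Icc, mem_wset]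
      refine ⟨⟨his, by simp only; omega⟩, ?_, ?_, ?_⟩
      · intro x hx
        rw [mem_erase] at hx
        have h1 := hone x hx.2 hx.1
        have h2 := mem_Ico.1 (hK1 hx.2)
        rw [mem_Ico]; omega
      · simp only
        rw [card_erase_of_mem hi]; omega
      · intro m
        simp only
        by_cases hm : m ≤ s
        · rw [filter_false_of_mem]
          · simp
          · intro x hx
            rw [mem_erase] at hx
            have h1 := hone x hx.2 hx.1
            omega
        · have h1 := hK3 (s + 1 + m)
          rw [zero_add] at h1
          rw [filter_erase, card_erase_of_mem (mem_filter.2 ⟨hi, by omega⟩)]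
          rw [Nat.mul_sub, mul_one]
          omega
    refine (card_le_card hsub).trans (card_image_le.trans ?_)
    rw [card_product, Nat.card_Icc]
    apply Nat.mul_le_mul_right
    omega
  have h3 := card_filter_add_card_filter_not (s := W) (fun K => ∀ g ∈ K, 2 * s + 1 ≤ g)
  omega

theorem B1_le (hS : ShOn (range (N + s + 1)) F) :
    (BB F N s l).card ≤ (B2 F N s l).card + ∑ y ∈ range s, (TT F N s l (y + 1)).card := by
  classical
  have h3 := card_filter_add_card_filter_not (s := BB F N s l) (fun G => ∀ g ∈ G, 2 * s + 1 ≤ g)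
  rw [← h3]
  apply Nat.add_le_add_left
  have hsub : (BB F N s l).filter (fun G => ¬ ∀ g ∈ G, 2 * s + 1 ≤ g) ⊆
      (range s).biUnion (fun y => (TT F N s l (y + 1)).image (fun G => insert (s + 1 + y) G)) := by
    intro A hA
    rw [mem_filter] at hA
    obtain ⟨hA1, hA2⟩ := hA
    push Not at hA2
    obtain ⟨g, hg, hg2⟩ := hA2
    have hne : A.Nonempty := ⟨g, hg⟩
    have hm := min'_mem A hne
    have hAU := (mem_powersetCard.1 (Lk_sub _ _ _ _ hA1)).1
    have hm1 := mem_UU.1 (hAU hm)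
    have hm2 := min'_le A g hg
    set z := A.min' hne with hz
    rw [mem_biUnion]
    refine ⟨z - (s + 1), mem_range.2 (by omega), ?_⟩
    rw [mem_image]
    have e : s + 1 + (z - (s + 1)) = z := by omega
    refine ⟨A.erase z, ?_, by rw [e, insert_erase hm]⟩
    unfold TT
    rw [mem_filter]
    refine ⟨BB_shad hS A hA1 z hm, ?_⟩
    intro x hx
    rw [mem_erase] at hx
    have := min'_le A x hx.2
    omega
  refine (card_le_card hsub).trans (card_biUnion_le.trans (sum_le_sum ?_))
  intro y _
  exact card_image_le

theorem TT_diff (y : ℕ) (hl : 0 < l) : (TT F N s l y).card = (TT F N s l (y + 1)).card +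
    (Lk (FF F N s l s) {s + 1 + y} (Ico (s + 1 + y + 1) (N + s + 1)) (l - 1)).card := by
  classical
  by_cases hy : s + 1 + y < N + s + 1
  · have hz : s + 1 + y ∉ Ico (s + 1 + y + 1) (N + s + 1) := by simp
    have hsub : TT F N s l y ⊆ (insert (s + 1 + y) (Ico (s + 1 + y + 1) (N + s + 1))).powersetCard (l - 1 + 1) := by
      intro G hG
      unfold TT at hG
      rw [mem_filter] at hG
      have h1 := mem_powersetCard.1 (FF_sub s hG.1)
      rw [mem_powersetCard]
      refine ⟨fun x hx => ?_, by omega⟩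
      have h2 := hG.2 x hx
      have h3 := mem_UU.1 (h1.1 hx)
      rw [mem_insert, mem_Ico]; omega
    rw [split_card hz hsub]
    congr 2
    · ext G
      unfold TT
      simp only [mem_filter]
      constructor
      · rintro ⟨⟨h1, h2⟩, h3⟩
        refine ⟨h1, fun g hg => ?_⟩
        have := h2 g hg
        have : g ≠ s + 1 + y := fun h => h3 (h ▸ hg)
        omega
      · rintro ⟨h1, h2⟩
        refine ⟨⟨h1, fun g hg => by have := h2 g hg; omega⟩, fun h => by have := h2 _ h; omega⟩
    · ext G
      simp only [mem_Lk, TT, mem_filter]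
      constructor
      · tauto
      · rintro ⟨h1, h2, h3⟩
        refine ⟨h1, h2, h3, ?_⟩
        intro g hg
        rw [mem_union, mem_singleton] at hg
        rcases hg with rfl | hg
        · exact le_rfl
        · have := mem_Ico.1 (h1 hg); omega
  · have h0 : (Lk (FF F N s l s) {s + 1 + y} (Ico (s + 1 + y + 1) (N + s + 1)) (l - 1)) = ∅ := by
      rw [eq_empty_iff_forall_notMem]
      intro G hG
      rw [mem_Lk] at hG
      have := (mem_powersetCard.1 (FF_sub s hG.2.2)).1 (mem_union_left _ (mem_singleton_self _))
      rw [mem_UU] at this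
      omega
    have h1 : ∀ y', y ≤ y' → TT F N s l y' = TT F N s l y := by
      intro y' hy'
      unfold TT
      apply filter_congr
      intro G hG
      have hG' := mem_powersetCard.1 (FF_sub s hG)
      obtain ⟨g, hg⟩ := card_pos.1 (by omega : 0 < G.card)
      have h2 := mem_UU.1 (hG'.1 hg)
      constructor
      · intro h; have := h g hg; omega
      · intro h; have := h g hg; omega
    rw [h0, h1 (y + 1) (by omega)]
    simp

theorem TT_ratio (hS : ShOn (range (N + s + 1)) F) (hl : 0 < l) (y : ℕ) (hy : y < N) :
    (Lk (FF F N s l s) {s + 1 + (y + 1)} (Ico (s + 1 + (y + 1) + 1) (N + s + 1)) (l - 1)).card * (N + (l - 1)) ≤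
    (Lk (FF F N s l s) {s + 1 + y} (Ico (s + 1 + y + 1) (N + s + 1)) (l - 1)).card * N := by
  classical
  set E := FF F N s l s with hE
  have hSE : ShOn (UU N s) E := FF_sh hS le_rfl
  set w := s + 1 + y with hw
  have e1 : s + 1 + (y + 1) = w + 1 := by omega
  rw [e1]
  set V := Ico (w + 1 + 1) (N + s + 1) with hV
  have hwU : w ∈ UU N s := by rw [mem_UU]; omega
  have hVw : ∀ x ∈ V, w + 1 < x := by intro x hx; have := mem_Ico.1 hx; omega
  -- replacing w+1 by w
  have hfirst : Lk E {w + 1} V (l - 1) ⊆ Lk E {w} V (l - 1) := by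
    intro G hG
    rw [mem_Lk, ← insert_eq] at *
    refine ⟨hG.1, hG.2.1, ?_⟩
    have h1 : w + 1 ∉ G := fun h => by have := hVw _ (hG.1 h); omega
    have h2 : w ∉ G := fun h => by have := hVw _ (hG.1 h); omega
    have := hSE _ hG.2.2 (w + 1) (mem_insert_self _ _) w hwU (by omega) (by
      rw [mem_insert]; push Not; exact ⟨by omega, h2⟩)
    rwa [erase_insert h1] at this
  have hVsub : V ⊆ Ico (w + 1) (N + s + 1) := by
    intro x hx; have := hVw x hx; rw [mem_Ico] at *; omega
  by_cases hl1 : l = 1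
  · subst hl1
    simp only [Nat.sub_self, add_zero]
    apply Nat.mul_le_mul_right
    refine (card_le_card hfirst).trans (card_le_card ?_)
    intro G hG
    rw [mem_Lk] at *
    exact ⟨hG.1.trans hVsub, hG.2⟩
  obtain ⟨l', rfl⟩ : ∃ l', l = l' + 2 := ⟨l - 2, by omega⟩
  have e2 : l' + 2 - 1 = l' + 1 := by omega
  rw [e2] at *
  by_cases hwn : w + 1 < N + s + 1
  swap
  · have : Lk E {w + 1} V (l' + 1) = ∅ := by
      rw [eq_empty_iff_forall_notMem]
      intro G hG
      rw [mem_Lk] at hG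
      have := (mem_powersetCard.1 (FF_sub s hG.2.2)).1 (mem_union_left _ (mem_singleton_self _))
      rw [mem_UU] at this
      omega
    rw [this]; simp
  have hIco : Ico (w + 1) (N + s + 1) = insert (w + 1) V := by
    ext x; rw [mem_insert, mem_Ico, hV, mem_Ico]; omega
  rw [hIco]
  have hwV : w + 1 ∉ V := fun h => lt_irrefl _ (hVw _ h)
  rw [split_card hwV (Lk_sub _ _ _ _)]
  have hA : (Lk E {w + 1} V (l' + 1)).card ≤ ((Lk E {w} (insert (w + 1) V) (l' + 1)).filter (fun A => w + 1 ∉ A)).card := by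
    apply card_le_card
    intro G hG
    have h1 := hfirst hG
    rw [mem_Lk] at h1
    rw [mem_filter, mem_Lk]
    exact ⟨⟨h1.1.trans (subset_insert _ _), h1.2⟩, fun h => hwV (h1.1 h)⟩
  have hB := lym (Lk_sub E {w + 1} V (l' + 1)) (Lk_sub (Lk E {w} (insert (w + 1) V) (l' + 1)) {w + 1} V l') (by
    intro G hG x hx
    rw [mem_Lk, ← insert_eq] at hG
    have hxV := hVw x (hG.1 hx)
    have hwG : w + 1 ∉ G := fun h => hwV (hG.1 h)
    have hwG' : w ∉ G := fun h => by have := hVw _ (hG.1 h); omega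
    have hwG2 : w + 1 ∉ G.erase x := fun h => hwG (mem_of_mem_erase h)
    have hce : (G.erase x).card = l' := by rw [card_erase_of_mem hx]; omega
    rw [mem_Lk, mem_Lk, ← insert_eq, ← insert_eq]
    refine ⟨(erase_subset _ _).trans hG.1, hce, insert_subset_insert _ ((erase_subset _ _).trans hG.1),
      by rw [card_insert_of_notMem hwG2, hce], ?_⟩
    have := hSE _ hG.2.2 x (mem_insert_of_mem hx) w hwU (by omega) (by
      rw [mem_insert]; push Not; exact ⟨by omega, hwG'⟩)
    rwa [erase_insert_of_ne (by omega)] at this)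
  have hVc : V.card - l' ≤ N := by rw [hV, Nat.card_Ico]; omega
  have hC := hB.trans (Nat.mul_le_mul_left _ hVc)
  rw [add_mul, mul_add]
  have := Nat.mul_le_mul_right N hA
  omega
end

end

section
set_option linter.unusedVariables false

theorem crossing {s : ℕ} (q w : ℕ → ℝ) (z0 : ℕ) (hz0 : z0 < s)
    (hq : ∀ i j, i ≤ j → j < s → q j ≤ q i) (hq0 : 0 ≤ q z0)
    (hw1 : ∀ z, z ≤ z0 → w z ≤ 0) (hw2 : ∀ z, z0 < z → z < s → 0 ≤ w z)
    (hsum : ∑ z ∈ range s, w z ≤ 0) : ∑ z ∈ range s, q z * w z ≤ 0 := by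
  have h1 : ∑ z ∈ range s, q z * w z ≤ ∑ z ∈ range s, q z0 * w z := by
    apply sum_le_sum
    intro z hz
    rw [mem_range] at hz
    rcases le_or_gt z z0 with h | h
    · exact mul_le_mul_of_nonpos_right (hq z z0 h hz0) (hw1 z h)
    · exact mul_le_mul_of_nonneg_right (hq z0 z h.le hz) (hw2 z h hz)
  rw [← mul_sum] at h1
  exact h1.trans (mul_nonpos_of_nonneg_of_nonpos hq0 hsum)

theorem sum_id (s : ℕ) : ∑ z ∈ range s, (z : ℝ) = s * (s - 1) / 2 := by
  induction s with
  | zero => simp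
  | succ n ih => rw [sum_range_succ, ih]; push_cast; ring

theorem sum_sq (s : ℕ) : ∑ z ∈ range s, (z : ℝ) ^ 2 = (s - 1) * s * (2 * s - 1) / 6 := by
  induction s with
  | zero => simp
  | succ n ih => rw [sum_range_succ, ih]; push_cast; ring

theorem kap_one {s : ℕ} (hs : 0 < s) (a : ℕ → ℝ) (ha : ∀ z, 0 ≤ a z) (hr : ∀ z, z < s → a (z + 1) ≤ a z) :
    ∑ z ∈ range s, (z : ℝ) * a z ≤ 1 / 2 * s * ∑ z ∈ range s, a z := by
  have hanti : ∀ i j, i ≤ j → j < s → a j ≤ a i := by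
    intro i j hij
    induction j, hij using Nat.le_induction with
    | base => intro _; exact le_rfl
    | succ m hm ih => intro h; exact (hr m (by omega)).trans (ih (by omega))
  have h := crossing (s := s) a (fun z => (z : ℝ) - 1 / 2 * s) (s / 2) (by omega) hanti (ha _) ?_ ?_ ?_
  · have : ∑ z ∈ range s, a z * ((z : ℝ) - 1 / 2 * s) = ∑ z ∈ range s, (z : ℝ) * a z - 1 / 2 * s * ∑ z ∈ range s, a z := by
      rw [mul_sum, ← sum_sub_distrib]
      exact sum_congr rfl (fun z _ => by ring)
    linarith
  · intro z hz
    have : 2 * z ≤ s := by omega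
    have : (2 : ℝ) * z ≤ s := by exact_mod_cast this
    linarith
  · intro z hz _
    have : s ≤ 2 * z := by omega
    have : (s : ℝ) ≤ 2 * z := by exact_mod_cast this
    linarith
  · rw [sum_sub_distrib, sum_id]
    simp
    have : (0 : ℝ) ≤ s := by positivity
    nlinarith

theorem kap_two {s : ℕ} (hs : 0 < s) (a : ℕ → ℝ) (P : ℝ) (ha : ∀ z, 0 ≤ a z)
    (hP : (s : ℝ) < P) (hP2 : P ≤ 6.13 * s)
    (hr : ∀ z, z < s → a (z + 1) * (P - z) ≤ a z * (P - z - 1)) :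
    ∑ z ∈ range s, (z : ℝ) * a z ≤ 0.486 * s * ∑ z ∈ range s, a z := by
  have hp : ∀ z : ℕ, z ≤ s → 0 < P - z := by
    intro z hz
    have : (z : ℝ) ≤ s := by exact_mod_cast hz
    linarith
  have hs' : (1 : ℝ) ≤ s := by exact_mod_cast hs
  have hanti : ∀ i j, i ≤ j → j < s → a j / (P - j) ≤ a i / (P - i) := by
    intro i j hij
    induction j, hij using Nat.le_induction with
    | base => intro _; exact le_rfl
    | succ m hm ih =>
      intro h
      refine le_trans ?_ (ih (by omega))
      have h1 := hr m (by omega)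
      have h2 := hp m (by omega)
      have h3 := hp (m + 1) (by omega)
      rw [div_le_div_iff₀ h3 h2]
      push_cast
      linarith
  have hfl : ((⌊0.486 * (s : ℝ)⌋₊ : ℕ) : ℝ) ≤ 0.486 * s := Nat.floor_le (by positivity)
  have hz0 : ⌊0.486 * (s : ℝ)⌋₊ < s := by
    have : ((⌊0.486 * (s : ℝ)⌋₊ : ℕ) : ℝ) < s := by linarith
    exact_mod_cast this
  have h := crossing (s := s) (fun z => a z / (P - z)) (fun z => (P - z) * ((z : ℝ) - 0.486 * s)) ⌊0.486 * (s : ℝ)⌋₊ hz0 hanti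
    (div_nonneg (ha _) (hp _ hz0.le).le) ?_ ?_ ?_
  · have : ∑ z ∈ range s, a z / (P - z) * ((P - z) * ((z : ℝ) - 0.486 * s)) = ∑ z ∈ range s, (z : ℝ) * a z - 0.486 * s * ∑ z ∈ range s, a z := by
      rw [mul_sum, ← sum_sub_distrib]
      refine sum_congr rfl (fun z hz => ?_)
      have := hp z (mem_range.1 hz).le
      field_simp
    linarith
  · intro z hz
    apply mul_nonpos_of_nonneg_of_nonpos (hp z (hz.trans hz0.le)).le
    have : (z : ℝ) ≤ (⌊0.486 * (s : ℝ)⌋₊ : ℕ) := by exact_mod_cast hz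
    linarith
  · intro z hz hzs
    apply mul_nonneg (hp z hzs.le).le
    have := (Nat.floor_lt (by positivity)).1 hz
    linarith
  · have : ∑ z ∈ range s, (P - z) * ((z : ℝ) - 0.486 * s) =
        (P + 0.486 * s) * ∑ z ∈ range s, (z : ℝ) - ∑ z ∈ range s, (z : ℝ) ^ 2 - s * (P * (0.486 * s)) := by
      rw [mul_sum, ← sum_sub_distrib]
      have e : (s : ℝ) * (P * (0.486 * s)) = ∑ z ∈ range s, (P * (0.486 * s)) := by simp
      rw [e, ← sum_sub_distrib]
      exact sum_congr rfl (fun z _ => by ring)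
    rw [this, sum_id, sum_sq]
    have h1 : (P + 0.486 * s) * (s * (s - 1) / 2) - (s - 1) * s * (2 * s - 1) / 6 - s * (P * (0.486 * s)) =
      s * (0.014 * (P * s) - P / 2 + 0.486 * s * (s - 1) / 2 - (s - 1) * (2 * s - 1) / 6) := by ring
    rw [h1]
    apply mul_nonpos_of_nonneg_of_nonpos (by linarith)
    nlinarith [mul_le_mul_of_nonneg_right hP2 (by linarith : (0:ℝ) ≤ s)]

theorem uv_bound {x : ℝ} (hx : 0 ≤ x) (k : ℕ) :
    2 * k * x + k * (k - 1) * (k - 2) * x ^ 3 / 3 ≤ (1 + x) ^ k - (1 - x) ^ k ∧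
    2 + k * (k - 1) * x ^ 2 ≤ (1 + x) ^ k + (1 - x) ^ k := by
  induction k with
  | zero => norm_num
  | succ k ih =>
    obtain ⟨h1, h2⟩ := ih
    have hk : (0 : ℝ) ≤ (k : ℝ) * (k - 1) * (k - 2) := by
      rcases k with _ | _ | k
      · simp
      · simp
      · push_cast
        have : (0 : ℝ) ≤ k := by positivity
        have e : ((k : ℝ) + 1 + 1) * (k + 1 + 1 - 1) * (k + 1 + 1 - 2) = (k + 2) * (k + 1) * k := by ring
        rw [e]; positivity
    constructor
    · have e : (1 + x) ^ (k + 1) - (1 - x) ^ (k + 1) = ((1 + x) ^ k - (1 - x) ^ k) + x * ((1 + x) ^ k + (1 - x) ^ k) := by ring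
      rw [e]
      have := mul_le_mul_of_nonneg_left h2 hx
      push_cast
      linarith
    · have e : (1 + x) ^ (k + 1) + (1 - x) ^ (k + 1) = ((1 + x) ^ k + (1 - x) ^ k) + x * ((1 + x) ^ k - (1 - x) ^ k) := by ring
      rw [e]
      have := mul_le_mul_of_nonneg_left h1 hx
      have h4 : 0 ≤ x * (k * (k - 1) * (k - 2) * x ^ 3 / 3) := by positivity
      push_cast
      linarith

theorem exp_pow_bound {x : ℝ} (hx : 0 ≤ x) (l : ℕ) :
    (1 + x) ^ l + l * x ^ 2 / 3 ≤ Real.exp (l * x) := by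
  induction l with
  | zero => simp
  | succ l ih =>
    have h1 := Real.quadratic_le_exp_of_nonneg hx
    have e : ((l + 1 : ℕ) : ℝ) * x = l * x + x := by push_cast; ring
    rw [e, Real.exp_add]
    have h2 : (1 : ℝ) ≤ (1 + x) ^ l := one_le_pow₀ (by linarith)
    calc (1 + x) ^ (l + 1) + ((l + 1 : ℕ) : ℝ) * x ^ 2 / 3 ≤ ((1 + x) ^ l + l * x ^ 2 / 3) * (1 + x + x ^ 2 / 2) := by
          have : 0 ≤ (l : ℝ) * x ^ 2 / 3 * (x + x ^ 2 / 2) := by positivity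
          have : x ^ 2 / 2 ≤ (1 + x) ^ l * (x ^ 2 / 2) := le_mul_of_one_le_left (by positivity) h2
          push_cast
          rw [pow_succ]
          nlinarith [sq_nonneg x]
      _ ≤ _ := by
          apply mul_le_mul ih h1 (by positivity) (by positivity)

theorem g_bound {r : ℝ} (h1 : 0.39 ≤ r) (h2 : r ≤ 0.60025) :
    0.028 * (Real.exp (-r) - 1) - 0.486 * r + Real.exp r - 1 - r ^ 2 / 3 ≤ 0.3984 := by
  have e1 := Real.exp_bound' (x := r) (by linarith) (by linarith) (n := 5) (by norm_num)
  have e2 := Real.exp_bound (x := -r) (by rw [abs_neg, abs_of_nonneg] <;> linarith) (n := 4) (by norm_num)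
  have e3 := (abs_le.1 e2).2
  rw [abs_neg, abs_of_nonneg (by linarith)] at e3
  simp only [sum_range_succ, range_zero, sum_empty] at e1 e3
  norm_num [Nat.factorial] at e1 e3
  have e4 : Real.exp (-r) ≤ 1 - r + r ^ 2 / 2 - r ^ 3 / 6 + r ^ 4 * (5 / 96) := by linarith
  have h0 : (0:ℝ) ≤ r := by linarith
  have p2 : r ^ 2 ≤ 0.60025 * r := by nlinarith
  -- telescoping bound by monotonicity
  set c : ℝ := 0.60025 with hc
  have m3 : r ^ 3 ≤ c ^ 3 := by gcongr
  have m4 : r ^ 4 ≤ c ^ 4 := by gcongr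
  have m5 : r ^ 5 ≤ c ^ 5 := by gcongr
  have m2 : r ^ 2 ≤ c ^ 2 := by gcongr
  norm_num [hc] at m2 m3 m4 m5 
  nlinarith

end

section
set_option linter.unusedVariables false

theorem choose_low (N s : ℕ) (hs : s ≤ N) (l : ℕ) : (N - s).choose l * N ^ l ≤ (N - s) ^ l * N.choose l := by
  induction l with
  | zero => simp
  | succ l ih =>
    have h1 := Nat.choose_succ_right_eq (N - s) l
    have h2 := Nat.choose_succ_right_eq N l
    have h3 : (N - s - l) * N ≤ (N - s) * (N - l) := by
      rcases le_total (N - s) l with h | h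
      · rw [Nat.sub_eq_zero_of_le h]; simp
      · obtain ⟨d, hd⟩ := Nat.exists_eq_add_of_le h
        have e1 : N - s - l = d := by omega
        have e2 : N - l = d + s := by omega
        have e3 : N = l + d + s := by omega
        rw [e1, e2, hd, e3]; nlinarith
    apply Nat.le_of_mul_le_mul_right (c := l + 1) _ (by omega)
    calc (N - s).choose (l + 1) * N ^ (l + 1) * (l + 1) = ((N - s).choose l * N ^ l) * ((N - s - l) * N) := by
          rw [pow_succ]; linear_combination (N ^ l * N) * h1
      _ ≤ ((N - s) ^ l * N.choose l) * ((N - s) * (N - l)) := Nat.mul_le_mul ih h3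
      _ = (N - s) ^ (l + 1) * N.choose (l + 1) * (l + 1) := by
          rw [pow_succ]; linear_combination ((N - s) ^ l * (N - s)) * h2.symm

theorem choose_high (N s : ℕ) (l : ℕ) : N.choose l * (N + s) ^ l ≤ (N + s + 1).choose l * N ^ l := by
  induction l with
  | zero => simp
  | succ l ih =>
    have h1 := Nat.choose_succ_right_eq (N + s + 1) l
    have h2 := Nat.choose_succ_right_eq N l
    have h3 : (N - l) * (N + s) ≤ (N + s + 1 - l) * N := by
      rcases le_total N l with h | h
      · rw [Nat.sub_eq_zero_of_le h]; simp
      · obtain ⟨d, hd⟩ := Nat.exists_eq_add_of_le h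
        have e1 : N + s + 1 - l = d + s + 1 := by omega
        have e2 : N - l = d := by omega
        rw [e1, e2, hd]; nlinarith
    apply Nat.le_of_mul_le_mul_right (c := l + 1) _ (by omega)
    calc N.choose (l + 1) * (N + s) ^ (l + 1) * (l + 1) = (N.choose l * (N + s) ^ l) * ((N - l) * (N + s)) := by
          rw [pow_succ]; linear_combination ((N + s) ^ l * (N + s)) * h2
      _ ≤ ((N + s + 1).choose l * N ^ l) * ((N + s + 1 - l) * N) := Nat.mul_le_mul ih h3
      _ = (N + s + 1).choose (l + 1) * N ^ (l + 1) * (l + 1) := by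
          rw [pow_succ]; linear_combination (N ^ l * N) * h1.symm

theorem choose_diff (N l : ℕ) : ∀ s, s ≤ N → N.choose (l + 1) ≤ (N - s).choose (l + 1) + s * (N - 1).choose l := by
  intro s
  induction s with
  | zero => simp
  | succ s ih =>
    intro h
    have h1 := ih (by omega)
    have e : N - s = N - (s + 1) + 1 := by omega
    rw [e, Nat.choose_succ_succ] at h1
    have h2 : (N - (s + 1)).choose l ≤ (N - 1).choose l := Nat.choose_le_choose _ (by omega)
    nlinarith

theorem abel_T (T a : ℕ → ℝ) (h : ∀ y, T y = T (y + 1) + a y) (m : ℕ) :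
    ∑ y ∈ range m, T (y + 1) = m * T m + ∑ z ∈ range m, (z : ℝ) * a z ∧ ∑ z ∈ range m, a z = T 0 - T m := by
  induction m with
  | zero => simp
  | succ m ih =>
    rw [sum_range_succ, sum_range_succ, sum_range_succ, ih.1, ih.2, h m]
    push_cast
    constructor <;> ring

variable {F : Finset (Finset ℕ)} {N s l : ℕ}

set_option maxHeartbeats 1000000 in
theorem comb_bound {B B2 S C C' Cs Ck Cn Cnk T0 Ts κ x N s l : ℝ} {L : ℕ} (hl : l = L)
    (hL : 1 ≤ L) (hs2 : 2 ≤ s) (hN : 1.666 * s * l ≤ N) (hx : x = s / N) (hC : 0 < C)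
    (hκ0 : 0 ≤ κ) (hκ : κ ≤ 1 / 2)
    (hB : B ≤ B2 + S) (hS : S ≤ s * Ts + κ * s * (T0 - Ts))
    (hT0 : T0 + Cs ≤ C) (hTs : Ts + C ≤ Cs + s * C')
    (hB2 : B2 + Cnk ≤ Ck + (s + 1) * (C - s * C') + s * Cn)
    (hC' : C' * (N - l + 1) = l * C)
    (hCk : Ck * (l + 1) ≤ Cs * (N - s)) (hCs0 : 0 ≤ Cs) (hCs : Cs ≤ (1 - x) ^ L * C)
    (hCnk : Cnk * (l + 1) = Cn * (N + s + 1 - l)) (hCn : (1 + x) ^ L * C ≤ Cn) :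
    B ≤ s * C * ((1 - 2 * κ) * ((1 - x) ^ L - 1) - κ * (l * x) + (1 + x) ^ L - 1 - l * (l - 1) * x ^ 2 / 3) + 3 * C := by
  have hl1 : (1 : ℝ) ≤ l := by rw [hl]; exact_mod_cast hL
  have hs : 1 ≤ s := by linarith
  have hsl : s ≤ s * l := le_mul_of_one_le_right (by linarith) hl1
  have hsl3 : 2 * l ≤ s * l := mul_le_mul_of_nonneg_right hs2 (by linarith)
  have hsl2 : l ≤ s * l := le_mul_of_one_le_left (by linarith) hs
  have hN0 : 0 < N := by linarith
  have hx0 : 0 < x := by rw [hx]; positivity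
  have hxN : x * N = s := by rw [hx]; field_simp
  have hlx : l * x ≤ 0.61 := by
    rw [hx, mul_div_assoc', div_le_iff₀ hN0]; linarith
  have hNl : 0 < N - l + 1 := by linarith
  -- s C' ≥ l x C
  have hC'0 : 0 ≤ C' := by
    by_contra h
    push Not at h
    have : C' * (N - l + 1) < 0 := mul_neg_of_neg_of_pos h hNl
    have : 0 < l * C := by positivity
    linarith
  have hrho : l * x * C ≤ s * C' := by
    have : l * C ≤ C' * N := by rw [← hC']; exact mul_le_mul_of_nonneg_left (by linarith) hC'0
    have h2 := mul_le_mul_of_nonneg_left this hx0.le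
    rw [← hxN]
    linarith
  have hR2 : (1 + x) ^ L ≤ 2 := by
    have h1 := exp_pow_bound hx0.le L
    rw [← hl] at h1
    have h2 : Real.exp (l * x) ≤ Real.exp 0.61 := Real.exp_le_exp.2 hlx
    have h3 : Real.exp 0.61 ≤ 2 := by
      have e1 := Real.exp_bound' (x := 0.61) (by norm_num) (by norm_num) (n := 4) (by norm_num)
      simp only [sum_range_succ, range_zero, sum_empty] at e1
      norm_num [Nat.factorial] at e1
      norm_num
      linarith
    have : 0 ≤ l * x ^ 2 / 3 := by positivity
    linarith
  obtain ⟨huv, -⟩ := uv_bound hx0.le (L + 1)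
  set R := (1 + x) ^ L with hR
  set Q := (1 - x) ^ L with hQ
  rw [pow_succ (1 + x), pow_succ (1 - x), ← hR, ← hQ] at huv
  push_cast at huv
  rw [← hl] at huv
  have hxs : x * N = s := hxN
  -- tail
  have t1 : Ck * (l + 1) ≤ Q * C * (N - s) := hCk.trans (mul_le_mul_of_nonneg_right hCs (by linarith))
  have hM : 0 ≤ N + 1 - l - s * l := by linarith
  have t2 : (s * Cn - Cnk) * (l + 1) ≤ - (R * C) * (N + 1 - l - s * l) := by
    have : (s * Cn - Cnk) * (l + 1) = - Cn * (N + 1 - l - s * l) := by linear_combination - hCnk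
    rw [this]
    have := mul_le_mul_of_nonneg_right hCn hM
    linarith
  have t3 : (Ck + s * Cn - Cnk) * (l + 1) ≤ C * (Q * (N - s) - R * (N + s) + R * s * (l + 1) + R * l) := by
    have : 0 ≤ R * C := by positivity
    linarith
  have t4 : Q * (N - s) - R * (N + s) ≤ - N * (2 * (l + 1) * x + (l + 1) * l * (l - 1) * x ^ 3 / 3) := by
    have := mul_le_mul_of_nonneg_left huv hN0.le
    have e : Q * (N - s) - R * (N + s) = - (N * (R * (1 + x) - Q * (1 - x))) := by rw [← hxs]; ring
    rw [e]
    ring_nf at this ⊢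
    linarith
  have t5 : - N * (2 * (l + 1) * x + (l + 1) * l * (l - 1) * x ^ 3 / 3) = (l + 1) * (- s * (2 + l * (l - 1) * x ^ 2 / 3)) := by
    rw [← hxs]; ring
  have t6 : Ck + s * Cn - Cnk ≤ C * (- s * (2 + l * (l - 1) * x ^ 2 / 3) + R * s + 2) := by
    have h0 : R * l ≤ 2 * (l + 1) := by
      have := mul_le_mul_of_nonneg_right hR2 (by linarith : 0 ≤ l)
      linarith
    have : (Ck + s * Cn - Cnk) * (l + 1) ≤ C * (- s * (2 + l * (l - 1) * x ^ 2 / 3) + R * s + 2) * (l + 1) := by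
      refine t3.trans ?_
      have h5 : Q * (N - s) - R * (N + s) + R * s * (l + 1) + R * l ≤ (- s * (2 + l * (l - 1) * x ^ 2 / 3) + R * s + 2) * (l + 1) := by
        linarith
      have := mul_le_mul_of_nonneg_left h5 hC.le
      linarith
    exact le_of_mul_le_mul_right this (by linarith)
  have t7 : B2 ≤ C * (- s * (2 + l * (l - 1) * x ^ 2 / 3) + R * s + 2) + (s + 1) * C - s * (s * C') := by
    have : 0 ≤ s * C' := by positivity
    linarith
  have t8 : S ≤ s * ((1 - 2 * κ) * (Cs - C) + (1 - κ) * (s * C')) := by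
    have : s * Ts + κ * s * (T0 - Ts) = s * ((1 - κ) * Ts + κ * T0) := by ring
    rw [this] at hS
    refine hS.trans (mul_le_mul_of_nonneg_left ?_ (by linarith))
    have h1 := mul_le_mul_of_nonneg_left (by linarith : Ts ≤ Cs + s * C' - C) (by linarith : 0 ≤ 1 - κ)
    have h2 := mul_le_mul_of_nonneg_left (by linarith : T0 ≤ C - Cs) hκ0
    linarith
  have t9 : s * ((1 - 2 * κ) * (Cs - C)) ≤ s * ((1 - 2 * κ) * (Q * C - C)) := by
    have : 0 ≤ 1 - 2 * κ := by linarith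
    gcongr
  have t10 : s * (κ * (l * x * C)) ≤ s * (κ * (s * C')) := by gcongr
  linarith

theorem l_one (m : ℕ) (hm : m = 0) (x : ℝ) (hx : x ≤ 0.61) :
    (1 - 2 * (1 / 2)) * ((1 - x) ^ (m + 1) - 1) - 1 / 2 * (((m + 1 : ℕ) : ℝ) * x) + (1 + x) ^ (m + 1) - 1 -
      ((m + 1 : ℕ) : ℝ) * (((m + 1 : ℕ) : ℝ) - 1) * x ^ 2 / 3 ≤ 0.3984 := by
  subst hm
  norm_num
  linarith

set_option maxHeartbeats 1000000 in
theorem B_bound (hl : 1 ≤ l) (hs1 : (1000000 : ℝ) ≤ s) (hN : 1.666 * (s : ℝ) * l ≤ N)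
    (hF : F ⊆ (range (N + s + 1)).powersetCard (l + 1)) (hS : ShOn (range (N + s + 1)) F) (hs : NoM F s)
    (hE : (FF F N s l s).card + (N - s).choose l ≤ N.choose l) :
    ((BB F N s l).card : ℝ) ≤ 0.3985 * s * N.choose l := by
  have hspos : 0 < s := by
    rcases Nat.eq_zero_or_pos s with h | h
    · rw [h] at hs1; norm_num at hs1
    · exact h
  have hl1 : (1 : ℝ) ≤ l := by exact_mod_cast hl
  have hsl : (s : ℝ) ≤ s * l := le_mul_of_one_le_right (by linarith) hl1
  have hsl2 : (l : ℝ) ≤ s * l := le_mul_of_one_le_left (by linarith) (by linarith)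
  have hNr : (0 : ℝ) < N := by linarith
  have hsN : s ≤ N := by
    have : (s : ℝ) ≤ N := by linarith
    exact_mod_cast this
  have hlN : l ≤ N := by
    have : (l : ℝ) ≤ N := by linarith
    exact_mod_cast this
  have hC : (0 : ℝ) < N.choose l := by exact_mod_cast Nat.choose_pos hlN
  obtain ⟨m, rfl⟩ : ∃ m, l = m + 1 := ⟨l - 1, by omega⟩
  by_cases hρ : ((m + 1 : ℕ) : ℝ) * s < 0.39 * N ∧ True
  · have hρ := hρ.1
    have h1 := BB_le (l := m + 1) hS hs
    have h2 := choose_diff N m s hsN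
    have h3 : N * (N - 1).choose m = N.choose (m + 1) * (m + 1) := by
      have := Nat.add_one_mul_choose_eq (N - 1) m
      have e : N - 1 + 1 = N := by omega
      rw [e] at this
      exact this
    have h4 : (FF F N s (m + 1) s).card ≤ s * (N - 1).choose m := by omega
    have h1r : ((BB F N s (m + 1)).card : ℝ) ≤ s * (FF F N s (m + 1) s).card := by exact_mod_cast h1
    have h3r : (N : ℝ) * (N - 1).choose m = N.choose (m + 1) * ((m + 1 : ℕ) : ℝ) := by exact_mod_cast h3
    have h4r : ((FF F N s (m + 1) s).card : ℝ) ≤ s * (N - 1).choose m := by exact_mod_cast h4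
    have h5 : ((FF F N s (m + 1) s).card : ℝ) ≤ 0.3985 * N.choose (m + 1) := by
      have : ((FF F N s (m + 1) s).card : ℝ) * N ≤ 0.3985 * N.choose (m + 1) * N := by
        calc _ ≤ (s : ℝ) * (N - 1).choose m * N := mul_le_mul_of_nonneg_right h4r hNr.le
          _ = N.choose (m + 1) * (((m + 1 : ℕ) : ℝ) * s) := by linear_combination (s : ℝ) * h3r
          _ ≤ N.choose (m + 1) * (0.39 * N) := by gcongr
          _ ≤ _ := by
            have := mul_pos hC hNr
            linarith
      exact le_of_mul_le_mul_right this hNr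
    calc _ ≤ _ := h1r
      _ ≤ s * (0.3985 * N.choose (m + 1)) := by gcongr
      _ = _ := by ring
  simp only [and_true, not_lt] at hρ
  set a : ℕ → ℝ := fun y => ((Lk (FF F N s (m + 1) s) {s + 1 + y} (Ico (s + 1 + y + 1) (N + s + 1)) m).card : ℝ) with ha
  set T : ℕ → ℝ := fun y => ((TT F N s (m + 1) y).card : ℝ) with hT
  have hTa : ∀ y, T y = T (y + 1) + a y := by
    intro y
    have := TT_diff (F := F) (N := N) (s := s) (l := m + 1) y (by omega)
    simp only [hT, ha]
    exact_mod_cast this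
  obtain ⟨ab1, ab2⟩ := abel_T T a hTa s
  have har : ∀ y, y < s → a (y + 1) * (N + m) ≤ a y * N := by
    intro y hy
    have := TT_ratio (F := F) (N := N) (s := s) (l := m + 1) hS (by omega) y (by omega)
    simp only [ha]
    exact_mod_cast this
  have ha0 : ∀ y, 0 ≤ a y := fun y => Nat.cast_nonneg _
  -- the various cardinality facts
  have hsl' : (s + 1) * (m + 1) ≤ N + 1 := by
    have h0 := mul_le_mul_of_nonneg_right hs1 (by linarith : (0 : ℝ) ≤ ((m + 1 : ℕ) : ℝ))
    have : ((s : ℝ) + 1) * ((m + 1 : ℕ) : ℝ) ≤ N + 1 := by linarith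
    exact_mod_cast this
  have w1 := wset_card s (s + 1) N m hsl'
  have w2 := wset_card s 0 (N + s + 1) (m + 1) (by linarith)
  have f1 := TT_s hF hS hs
  have f2 := B2_le hF hS hs
  have f3 := B1_le (N := N) (s := s) (l := m + 1) hS
  have f4 : T 0 = (FF F N s (m + 1) s).card := by simp only [hT]; rw [TT_zero]
  have w1r : ((wset s (s + 1) N (m + 1)).card : ℝ) + s * N.choose m = N.choose (m + 1) := by exact_mod_cast w1
  have w2r : ((wset s 0 (N + s + 1) (m + 1 + 1)).card : ℝ) + s * (N + s + 1).choose (m + 1) = (N + s + 1).choose (m + 1 + 1) := by exact_mod_cast w2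
  have f1r : T s + ((wset s (s + 1) N (m + 1)).card : ℝ) ≤ (N - s).choose (m + 1) := by simp only [hT]; exact_mod_cast f1
  have f2r : ((B2 F N s (m + 1)).card : ℝ) + ((wset s 0 (N + s + 1) (m + 1 + 1)).card : ℝ) ≤ (N - s).choose (m + 1 + 1) + (s + 1) * ((wset s (s + 1) N (m + 1)).card : ℝ) := by exact_mod_cast f2
  have f3r : ((BB F N s (m + 1)).card : ℝ) ≤ (B2 F N s (m + 1)).card + ∑ y ∈ range s, T (y + 1) := by
    simp only [hT]; exact_mod_cast f3
  have hEr : T 0 + (N - s).choose (m + 1) ≤ N.choose (m + 1) := by rw [f4]; exact_mod_cast hE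
  have c1 : (N.choose m : ℝ) * (N - ((m + 1 : ℕ) : ℝ) + 1) = ((m + 1 : ℕ) : ℝ) * N.choose (m + 1) := by
    have := Nat.choose_succ_right_eq N m
    have e : (N.choose (m + 1) : ℝ) * ((m + 1 : ℕ) : ℝ) = N.choose m * ((N - m : ℕ) : ℝ) := by exact_mod_cast this
    rw [Nat.cast_sub (by omega)] at e
    push_cast at e ⊢
    linarith
  have c2 : ((N - s).choose (m + 1 + 1) : ℝ) * (((m + 1 : ℕ) : ℝ) + 1) ≤ (N - s).choose (m + 1) * ((N : ℝ) - s) := by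
    have := Nat.choose_succ_right_eq (N - s) (m + 1)
    have e : ((N - s).choose (m + 1 + 1) : ℝ) * ((m + 1 + 1 : ℕ) : ℝ) = (N - s).choose (m + 1) * ((N - s - (m + 1) : ℕ) : ℝ) := by exact_mod_cast this
    have e2 : ((N - s - (m + 1) : ℕ) : ℝ) ≤ (N : ℝ) - s := by
      rw [← Nat.cast_sub hsN]; exact_mod_cast Nat.sub_le _ _
    push_cast at e ⊢
    rw [e]
    exact mul_le_mul_of_nonneg_left e2 (by positivity)
  have c3 : ((N + s + 1).choose (m + 1 + 1) : ℝ) * (((m + 1 : ℕ) : ℝ) + 1) = (N + s + 1).choose (m + 1) * ((N : ℝ) + s + 1 - ((m + 1 : ℕ) : ℝ)) := by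
    have := Nat.choose_succ_right_eq (N + s + 1) (m + 1)
    have e : ((N + s + 1).choose (m + 1 + 1) : ℝ) * ((m + 1 + 1 : ℕ) : ℝ) = (N + s + 1).choose (m + 1) * ((N + s + 1 - (m + 1) : ℕ) : ℝ) := by exact_mod_cast this
    rw [Nat.cast_sub (by omega)] at e
    push_cast at e ⊢
    linarith
  have c4 : ((N - s).choose (m + 1) : ℝ) ≤ (1 - (s : ℝ) / N) ^ (m + 1) * N.choose (m + 1) := by
    have := choose_low N s hsN (m + 1)
    have e : ((N - s).choose (m + 1) : ℝ) * (N : ℝ) ^ (m + 1) ≤ ((N - s : ℕ) : ℝ) ^ (m + 1) * N.choose (m + 1) := by exact_mod_cast this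
    rw [Nat.cast_sub hsN] at e
    have e2 : 1 - (s : ℝ) / N = (N - s) / N := by field_simp
    rw [e2, div_pow, div_mul_eq_mul_div, le_div_iff₀ (by positivity)]
    exact e
  have c5 : (1 + (s : ℝ) / N) ^ (m + 1) * N.choose (m + 1) ≤ (N + s + 1).choose (m + 1) := by
    have := choose_high N s (m + 1)
    have e : (N.choose (m + 1) : ℝ) * ((N : ℝ) + s) ^ (m + 1) ≤ (N + s + 1).choose (m + 1) * (N : ℝ) ^ (m + 1) := by exact_mod_cast this
    have e2 : 1 + (s : ℝ) / N = (N + s) / N := by field_simp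
    rw [e2, div_pow, div_mul_eq_mul_div, div_le_iff₀ (by positivity)]
    linarith
  have main : ∀ κ : ℝ, 0 ≤ κ → κ ≤ 1 / 2 → ∑ z ∈ range s, (z : ℝ) * a z ≤ κ * s * ∑ z ∈ range s, a z → _ :=
    fun κ h0 h1 h2 => comb_bound (κ := κ) (x := (s : ℝ) / N) (L := m + 1) (l := ((m + 1 : ℕ) : ℝ)) (N := N) (s := s)
      (B := (BB F N s (m + 1)).card) (B2 := (B2 F N s (m + 1)).card) (S := ∑ y ∈ range s, T (y + 1))
      (C := N.choose (m + 1)) (C' := N.choose m) (Cs := (N - s).choose (m + 1)) (Ck := (N - s).choose (m + 1 + 1))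
      (Cn := (N + s + 1).choose (m + 1)) (Cnk := (N + s + 1).choose (m + 1 + 1)) (T0 := T 0) (Ts := T s)
      rfl (by omega) (by linarith) hN rfl hC h0 h1 f3r (by rw [ab1, ← ab2]; linarith) hEr (by linarith)
      (by
        have : (N.choose (m + 1) : ℝ) - s * N.choose m = (wset s (s + 1) N (m + 1)).card := by linarith
        rw [this]; linarith) c1 c2 (by positivity) c4 c3 c5
  have hx0 : (0 : ℝ) ≤ (s : ℝ) / N := by positivity
  have h3C : 3 * (N.choose (m + 1) : ℝ) ≤ 0.0001 * s * N.choose (m + 1) := by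
    have := mul_le_mul_of_nonneg_right hs1 hC.le
    linarith
  have fin : ∀ e : ℝ, e ≤ 0.3984 → ((BB F N s (m + 1)).card : ℝ) ≤ s * N.choose (m + 1) * e + 3 * N.choose (m + 1) →
      ((BB F N s (m + 1)).card : ℝ) ≤ 0.3985 * s * N.choose (m + 1) := by
    intro e he h
    have : (s : ℝ) * N.choose (m + 1) * e ≤ s * N.choose (m + 1) * 0.3984 := by gcongr
    linarith
  rcases Nat.eq_zero_or_pos m with hm | hm
  · have := main (1 / 2) (by norm_num) le_rfl (kap_one hspos a ha0 (fun z hz => by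
      have := har z hz
      rw [hm] at this
      simp only [Nat.cast_zero, add_zero] at this
      exact le_of_mul_le_mul_right this hNr))
    refine fin _ ?_ this
    refine l_one m hm _ ?_
    rw [hm] at hN
    rw [div_le_iff₀ hNr]
    simp only [zero_add, Nat.cast_one, mul_one] at hN
    linarith
  · have hm1 : (1 : ℝ) ≤ m := by exact_mod_cast hm
    have hl0 : (0 : ℝ) < ((m + 1 : ℕ) : ℝ) := by positivity
    have k2 := kap_two (s := s) hspos a (s + 2 * N / ((m + 1 : ℕ) : ℝ)) ha0 (by
        have : 0 < 2 * (N : ℝ) / ((m + 1 : ℕ) : ℝ) := by positivity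
        linarith) (by
        have : 2 * (N : ℝ) / ((m + 1 : ℕ) : ℝ) ≤ 5.13 * s := by
          rw [div_le_iff₀ hl0]; linarith
        linarith) (by
        intro z hz
        have h1 := har z hz
        have hzs : (z : ℝ) + 1 ≤ s := by exact_mod_cast hz
        set P := (s : ℝ) + 2 * N / ((m + 1 : ℕ) : ℝ) - z - 1 with hP
        have hPm : (N : ℝ) ≤ m * P := by
          have : 2 * (N : ℝ) / ((m + 1 : ℕ) : ℝ) ≤ P := by linarith
          have h2 : (N : ℝ) ≤ m * (2 * (N : ℝ) / ((m + 1 : ℕ) : ℝ)) := by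
            rw [mul_div_assoc', le_div_iff₀ hl0]
            push_cast; nlinarith
          exact h2.trans (mul_le_mul_of_nonneg_left this (by linarith))
        have e : (s : ℝ) + 2 * N / ((m + 1 : ℕ) : ℝ) - z = P + 1 := by rw [hP]; ring
        rw [e]
        have hP0 : 0 ≤ P := by
          have : 0 ≤ 2 * (N : ℝ) / ((m + 1 : ℕ) : ℝ) := by positivity
          linarith
        have h3 : a (z + 1) * (P + 1) * N ≤ a z * P * N := by
          have h4 : a (z + 1) * N ≤ a (z + 1) * (m * P) := mul_le_mul_of_nonneg_left hPm (ha0 _)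
          have h5 := mul_le_mul_of_nonneg_right h1 hP0
          linarith
        exact le_of_mul_le_mul_right h3 hNr)
    have := main 0.486 (by norm_num) (by norm_num) k2
    refine fin _ ?_ this
    set r := ((m + 1 : ℕ) : ℝ) * ((s : ℝ) / N) with hr
    have hr1 : 0.39 ≤ r := by rw [hr, mul_div_assoc', le_div_iff₀ hNr]; exact hρ
    have hr2 : r ≤ 0.60025 := by rw [hr, mul_div_assoc', div_le_iff₀ hNr]; linarith
    have g := g_bound hr1 hr2
    have p := exp_pow_bound hx0 (m + 1)
    rw [← hr] at p
    have q : (1 - (s : ℝ) / N) ^ (m + 1) ≤ Real.exp (-r) := by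
      have h1 : 1 - (s : ℝ) / N ≤ Real.exp (-((s : ℝ) / N)) := by
        have := Real.add_one_le_exp (-((s : ℝ) / N)); linarith
      have h2 : 0 ≤ 1 - (s : ℝ) / N := by
        have : (s : ℝ) / N ≤ 1 := by rw [div_le_one hNr]; exact_mod_cast hsN
        linarith
      calc _ ≤ (Real.exp (-((s : ℝ) / N))) ^ (m + 1) := by gcongr
        _ = _ := by rw [← Real.exp_nat_mul, hr]; congr 1; ring
    have e : ((m + 1 : ℕ) : ℝ) * (((m + 1 : ℕ) : ℝ) - 1) * ((s : ℝ) / N) ^ 2 / 3 = r ^ 2 / 3 - ((m + 1 : ℕ) : ℝ) * ((s : ℝ) / N) ^ 2 / 3 := by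
      rw [hr]; ring
    rw [e]
    have : (1 - 2 * (0.486 : ℝ)) * ((1 - (s : ℝ) / N) ^ (m + 1) - 1) ≤ 0.028 * (Real.exp (-r) - 1) := by
      have : (1 - 2 * (0.486 : ℝ)) = 0.028 := by norm_num
      rw [this]
      gcongr
    linarith

end

section
set_option linter.unusedVariables false

theorem transport {N m l s : ℕ} {E : Finset (Finset ℕ)} (hE : E ⊆ (Ico m (N + m)).powersetCard l) (hs : NoM E s) :
    ∃ G : Finset (Finset ℕ), G ⊆ (range N).powersetCard l ∧ NoM G s ∧ G.card = E.card := by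
  classical
  set f : ℕ ↪ ℕ := addRightEmbedding m with hf
  have hr : Ico m (N + m) = (range N).map f := by
    ext x
    simp only [mem_Ico, mem_map, mem_range, hf, addRightEmbedding_apply]
    constructor
    · rintro ⟨h1, h2⟩
      exact ⟨x - m, by omega, by omega⟩
    · rintro ⟨a, h1, rfl⟩
      omega
  set G := ((range N).powersetCard l).filter (fun A => A.map f ∈ E) with hG
  have hinj : Function.Injective (fun A : Finset ℕ => A.map f) := map_injective f
  refine ⟨G, filter_subset _ _, ?_, ?_⟩
  · intro M hM hd
    rw [← card_image_of_injective M hinj]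
    apply hs
    · intro A hA
      obtain ⟨B, hB, rfl⟩ := mem_image.1 hA
      exact (mem_filter.1 (hM hB)).2
    · intro A hA B hB hAB
      rw [mem_coe, mem_image] at hA hB
      obtain ⟨A', hA', rfl⟩ := hA
      obtain ⟨B', hB', rfl⟩ := hB
      rw [disjoint_map]
      exact hd hA' hB' (fun h => hAB (by rw [h]))
  · rw [← card_image_of_injective G hinj]
    congr 1
    ext A
    rw [mem_image]
    constructor
    · rintro ⟨B, hB, rfl⟩
      exact (mem_filter.1 hB).2
    · intro hA
      have h1 := mem_powersetCard.1 (hE hA)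
      rw [hr, subset_map_iff] at h1
      obtain ⟨⟨u, hu, rfl⟩, h2⟩ := h1
      refine ⟨u, mem_filter.2 ⟨mem_powersetCard.2 ⟨hu, by rw [← h2, card_map]⟩, hA⟩, rfl⟩

theorem step {N s l t : ℕ} {F : Finset (Finset ℕ)} (hl : 1 ≤ l) (hs16 : 10 ^ 16 ≤ s) (ht1 : 1.666 * (s : ℝ) ≤ t)
    (ht2 : (t : ℝ) ≤ 1.666 * s + 1) (htN : t * l ≤ N)
    (hF : F ⊆ (range (N + s + 1)).powersetCard (l + 1)) (hS : ShOn (range (N + s + 1)) F) (hs : NoM F s)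
    (hE : (FF F N s l s).card + (N - s).choose l ≤ N.choose l) :
    F.card + (N + 1).choose (l + 1) ≤ (N + s + 1).choose (l + 1) := by
  classical
  have hs1 : (1000000 : ℝ) ≤ s := by
    have : (10 ^ 16 : ℝ) ≤ s := by exact_mod_cast hs16
    linarith
  have hNr : 1.666 * (s : ℝ) * l ≤ N := by
    have h1 : ((t : ℝ)) * l ≤ N := by exact_mod_cast htN
    exact (mul_le_mul_of_nonneg_right ht1 (by positivity)).trans h1
  have ht0 : 0 < t := by
    have : (0 : ℝ) < t := by linarith
    exact_mod_cast this
  have hlN : l ≤ N := le_trans (Nat.le_mul_of_pos_left l ht0) htN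
  have hC : (0 : ℝ) < N.choose l := by exact_mod_cast Nat.choose_pos hlN
  have hB := B_bound hl hs1 hNr hF hS hs hE
  have hBE := BB_le (l := l) hS hs
  have h1 := step_one hF
  change F.card + s * N.choose l + (N + 1).choose (l + 1) ≤ (N + s + 1).choose (l + 1) +
      ∑ i ∈ range (s + 1), (FF F N s l i).card + (BB F N s l).card at h1
  set C : ℝ := ((N.choose l : ℕ) : ℝ) with hCdef
  set α : ℕ → ℝ := fun i => ((FF F N s l i).card : ℝ) / C with hα
  have hαC : ∀ i, α i * C = (FF F N s l i).card := fun i => div_mul_cancel₀ _ hC.ne'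
  have hcardle : ∀ i, ((FF F N s l i).card : ℝ) ≤ C := by
    intro i
    have := card_le_card (FF_sub (F := F) (N := N) (s := s) (l := l) i)
    rw [card_powersetCard, UU_card] at this
    rw [hCdef]
    exact_mod_cast this
  have hne : Nonempty (↥(UU N s) ≃ Fin N) := ⟨Fintype.equivOfCardEq (by simp [UU_card])⟩
  have hreg := regimes (Ω := ↥(UU N s) ≃ Fin N) (s := s) (t := t) (x := fun j σ => xx l t (FF F N s l j) σ) (α := α)
    hs16 ht1 ht2
    (by
      intro i j σ hij hj
      apply card_le_card
      intro y hy
      rw [mem_filter] at hy ⊢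
      exact ⟨hy.1, FF_anti hS hij hj hy.2⟩)
    (by
      intro j σ
      exact (card_filter_le _ _).trans (card_range t).le)
    (fun σ => hall_step (fun j => FF F N s l j) (fun g hg hd => rainbow hs g hg hd) σ)
    (fun j => div_nonneg (Nat.cast_nonneg _) hC.le)
    (fun j => by rw [hα]; exact (div_le_one hC).2 (hcardle j))
    (by
      intro i j hij hj
      have : ((FF F N s l j).card : ℝ) ≤ (FF F N s l i).card := by exact_mod_cast card_le_card (FF_anti hS hij hj)
      exact div_le_div_of_nonneg_right this hC.le)
    (fun j hj => (mean_var UU_card (by omega) htN (FF_sub j) (FF_sh hS hj) (hαC j) hlN).1)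
    (fun j hj => (mean_var UU_card (by omega) htN (FF_sub j) (FF_sh hS hj) (hαC j) hlN).2)
  set D := ∑ i ∈ range s, (1 - α i) with hD
  have hsum : (∑ i ∈ range (s + 1), ((FF F N s l i).card : ℝ)) = s * C - D * C + α s * C := by
    have e : ∑ i ∈ range s, ((FF F N s l i).card : ℝ) = (∑ i ∈ range s, α i) * C := by
      rw [sum_mul]
      exact sum_congr rfl (fun i _ => (hαC i).symm)
    rw [sum_range_succ, ← hαC s, hD, sum_sub_distrib, e]
    simp only [sum_const, card_range, nsmul_eq_mul, mul_one]
    ring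
  have hBEr : ((BB F N s l).card : ℝ) ≤ s * (α s * C) := by rw [hαC]; exact_mod_cast hBE
  have hαs : α s * C ≤ C := by rw [hαC]; exact hcardle s
  have key : (∑ i ∈ range (s + 1), ((FF F N s l i).card : ℝ)) + (BB F N s l).card ≤ s * C := by
    rw [hsum]
    rcases hreg with h | h
    · have := mul_le_mul_of_nonneg_right h hC.le
      linarith
    · have := mul_le_mul_of_nonneg_right h hC.le
      linarith
  have key' : (∑ i ∈ range (s + 1), (FF F N s l i).card) + (BB F N s l).card ≤ s * N.choose l := by
    rw [hCdef] at key
    exact_mod_cast key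
  omega

theorem upper {ε : ℝ} (hε : 0 < ε) {s : ℕ} (hs16 : 10 ^ 16 ≤ s) (hsε : 2 ≤ ε * s) (l : ℕ) :
    ∀ (n : ℕ) (F : Finset (Finset ℕ)), (s : ℝ) + (1.666 + ε) * s * l ≤ n →
      F ⊆ (range n).powersetCard (l + 1) → NoM F s →
      F.card + (n - s).choose (l + 1) ≤ n.choose (l + 1) := by
  have hsr : (10 ^ 16 : ℝ) ≤ s := by exact_mod_cast hs16
  induction l with
  | zero =>
    intro n F hn hF hs
    have h1 : F.card ≤ s := by
      refine hs F subset_rfl ?_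
      intro A hA B hB hAB
      obtain ⟨a, rfl⟩ := card_eq_one.1 (mem_powersetCard.1 (hF hA)).2
      obtain ⟨b, rfl⟩ := card_eq_one.1 (mem_powersetCard.1 (hF hB)).2
      rw [disjoint_singleton]
      intro h
      exact hAB (by rw [h])
    have h2 : s ≤ n := by
      have : (s : ℝ) ≤ n := by simpa using hn
      exact_mod_cast this
    simp only [zero_add, Nat.choose_one_right]
    omega
  | succ m ih =>
    intro n F hn hF hs
    push_cast at hn
    have hm0 : (0 : ℝ) ≤ m := Nat.cast_nonneg _
    have hsm : (0 : ℝ) ≤ s * m := by positivity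
    have hεm : (2 : ℝ) * m ≤ ε * s * m := mul_le_mul_of_nonneg_right hsε hm0
    have hsn : s + 1 ≤ n := by
      have : (s : ℝ) + 1 ≤ n := by linarith
      exact_mod_cast this
    obtain ⟨N, rfl⟩ : ∃ N, n = N + s + 1 := ⟨n - s - 1, by omega⟩
    push_cast at hn
    obtain ⟨G, hG, hGs, hGc, hGS⟩ := exists_shifted _ _ s F hF hs
    have hGS' : ShOn (range (N + s + 1)) G := fun A hA x hx y _ hyx hyA => hGS A hA x hx y hyx hyA
    obtain ⟨E, hE1, hE2, hE3⟩ := transport (N := N) (m := s + 1) (l := m + 1) (E := FF G N s (m + 1) s) (s := s)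
      (FF_sub s) (NoM_E hGS' hGs)
    have hE4 := ih N E (by linarith) hE1 hE2
    rw [hE3] at hE4
    have ht2 : ((⌈1.666 * (s : ℝ)⌉₊ : ℕ) : ℝ) ≤ 1.666 * s + 1 := (Nat.ceil_lt_add_one (by positivity)).le
    have htN : ⌈1.666 * (s : ℝ)⌉₊ * (m + 1) ≤ N := by
      have h1 := mul_le_mul_of_nonneg_right ht2 (by linarith : (0 : ℝ) ≤ m + 1)
      have : ((⌈1.666 * (s : ℝ)⌉₊ : ℕ) : ℝ) * (m + 1) ≤ N := by linarith
      exact_mod_cast this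
    have := step (t := ⌈1.666 * (s : ℝ)⌉₊) (by omega) hs16 (Nat.le_ceil _) ht2 htN hG hGS' hGs hE4
    rw [hGc] at this
    have e : N + s + 1 - s = N + 1 := by omega
    rw [e]
    exact this


end

theorem mn_bdd (F : Finset (Finset ℕ)) : BddAbove {t : ℕ | ∃ M : Finset (Finset ℕ), M ⊆ F ∧
    (M : Set (Finset ℕ)).Pairwise (fun A B => Disjoint A B) ∧ M.card = t} := by
  refine ⟨F.card, ?_⟩
  rintro t ⟨M, hM, -, rfl⟩
  exact card_le_card hM

theorem mn_le_iff (F : Finset (Finset ℕ)) (s : ℕ) : matchingNumber F ≤ s ↔ NoM F s := by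
  constructor
  · intro h M hM hd
    exact (le_csSup (mn_bdd F) ⟨M, hM, hd, rfl⟩).trans h
  · intro h
    refine csSup_le ⟨0, ∅, empty_subset _, by simp, rfl⟩ ?_
    rintro t ⟨M, hM, hd, rfl⟩
    exact h M hM hd

theorem lower (n k s : ℕ) (hsn : s ≤ n) : ∃ F : Finset (Finset ℕ), F ⊆ (range n).powersetCard k ∧ NoM F s ∧
    F.card = n.choose k - (n - s).choose k := by
  classical
  refine ⟨(range n).powersetCard k \ (Ico s n).powersetCard k, sdiff_subset, ?_, ?_⟩
  · intro M hM hd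
    have hex : ∀ A ∈ M, ∃ x ∈ A, x < s := by
      intro A hA
      have h1 := mem_sdiff.1 (hM hA)
      have h2 := mem_powersetCard.1 h1.1
      by_contra hcon
      push Not at hcon
      apply h1.2
      rw [mem_powersetCard]
      exact ⟨fun x hx => mem_Ico.2 ⟨hcon x hx, mem_range.1 (h2.1 hx)⟩, h2.2⟩
    choose! f hf1 hf2 using hex
    have : M.card ≤ (range s).card := by
      refine card_le_card_of_injOn f (fun A hA => mem_coe.2 (mem_range.2 (hf2 A hA))) ?_
      intro A hA B hB hAB
      by_contra hne
      exact disjoint_left.1 (hd hA hB hne) (hf1 A hA) (by rw [hAB]; exact hf1 B hB)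
    rwa [card_range] at this
  · rw [card_sdiff_of_subset, card_powersetCard, card_powersetCard, card_range, Nat.card_Ico]
    apply powersetCard_mono
    intro x hx
    exact mem_range.2 (mem_Ico.1 hx).2

theorem erdos_matching_thm1v1 :
    ∀ ε : ℝ, 0 < ε → ∃ s₀ : ℕ, ∀ s k n : ℕ, s₀ ≤ s → 2 ≤ k →
      (s : ℝ) + (1.666 + ε) * s * ((k : ℝ) - 1) ≤ (n : ℝ) →
      maxSizeEMC n k s = n.choose k - (n - s).choose k := by
  intro ε hε
  refine ⟨max (10 ^ 16) ⌈2 / ε⌉₊, ?_⟩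
  intro s k n hs hk hn
  have hs16 : 10 ^ 16 ≤ s := (le_max_left _ _).trans hs
  have hs2 : ⌈2 / ε⌉₊ ≤ s := (le_max_right _ _).trans hs
  have hsε : 2 ≤ ε * s := by
    have h1 : 2 / ε ≤ s := (Nat.le_ceil _).trans (by exact_mod_cast hs2)
    rw [div_le_iff₀ hε] at h1
    linarith
  clear hs hs2
  obtain ⟨l, rfl⟩ : ∃ l, k = l + 1 := ⟨k - 1, by omega⟩
  have hn' : (s : ℝ) + (1.666 + ε) * s * l ≤ n := by
    have : ((l + 1 : ℕ) : ℝ) - 1 = l := by push_cast; ring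
    rw [this] at hn
    exact hn
  have hsn : s ≤ n := by
    have h1 : 0 ≤ (1.666 + ε) * s * l := by
      have : 0 ≤ 1.666 + ε := by linarith
      exact mul_nonneg (mul_nonneg this (Nat.cast_nonneg _)) (Nat.cast_nonneg _)
    have : (s : ℝ) ≤ n := by linarith
    exact_mod_cast this
  have hub : ∀ t ∈ {t : ℕ | ∃ F : Finset (Finset ℕ), F ⊆ (Finset.range n).powersetCard (l + 1) ∧
      matchingNumber F ≤ s ∧ F.card = t}, t ≤ n.choose (l + 1) - (n - s).choose (l + 1) := by
    rintro t ⟨F, hF, hm, rfl⟩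
    have := upper hε hs16 hsε l n F hn' hF ((mn_le_iff F s).1 hm)
    exact Nat.le_sub_of_add_le this
  obtain ⟨F, hF1, hF2, hF3⟩ := lower n (l + 1) s hsn
  have hmem : n.choose (l + 1) - (n - s).choose (l + 1) ∈ {t : ℕ | ∃ F : Finset (Finset ℕ), F ⊆ (Finset.range n).powersetCard (l + 1) ∧
      matchingNumber F ≤ s ∧ F.card = t} := ⟨F, hF1, (mn_le_iff F s).2 hF2, hF3⟩
  exact le_antisymm (csSup_le ⟨_, hmem⟩ hub) (le_csSup ⟨_, hub⟩ hmem)
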